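/- Let A be a differential graded Poisson algebra over a field k and set A^𝓔 := A ⊗ A^{op}, a differential graded Poisson algebra with the tensor product structure. Then (A^𝓔)^e ≅ (A^e)^𝓔 as differential graded algebras, where (A^e)^𝓔 := A^e ⊗ (A^e)^{op}. -/

import Mathlib

open scoped TensorProduct

noncomputable section

namespace DGPaper

universe u

/-- A differential graded Lie algebra structure on a `k`-vector space `V`. -/
structure DGLAOn (k : Type u) [Field k] (V : Type u) [AddCommGroup V] [Module k V] where
  gr : ℤ → Submodule k V
  decomp : DirectSum.Decomposition gr
  br : V →ₗ[k] V →ₗ[k] V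
  br_mem : ∀ {i j : ℤ} {a b : V}, a ∈ gr i → b ∈ gr j → br a b ∈ gr (i + j)
  br_antisymm : ∀ {i j : ℤ} {a b : V}, a ∈ gr i → b ∈ gr j →
    br a b = -(((-1 : k) ^ (i * j)) • br b a)
  br_jacobi : ∀ {i j l : ℤ} {a b c : V}, a ∈ gr i → b ∈ gr j → c ∈ gr l →
    br a (br b c) = br (br a b) c + ((-1 : k) ^ (i * j)) • br b (br a c)
  d : V →ₗ[k] V
  d_mem : ∀ {i : ℤ} {a : V}, a ∈ gr i → d a ∈ gr (i + 1)
  d_sq : ∀ a : V, d (d a) = 0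
  d_br : ∀ {i j : ℤ} {a b : V}, a ∈ gr i → b ∈ gr j →
    d (br a b) = br (d a) b + ((-1 : k) ^ i) • br a (d b)

/-- A differential graded (associative, unital) algebra structure on a `k`-vector space `N`. -/
structure DGAOn (k : Type u) [Field k] (N : Type u) [AddCommGroup N] [Module k N] where
  gr : ℤ → Submodule k N
  decomp : DirectSum.Decomposition gr
  mul : N →ₗ[k] N →ₗ[k] N
  one : N
  one_mem : one ∈ gr 0
  mul_mem : ∀ {i j : ℤ} {a b : N}, a ∈ gr i → b ∈ gr j → mul a b ∈ gr (i + j)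
  mul_assoc : ∀ a b c : N, mul (mul a b) c = mul a (mul b c)
  one_mul : ∀ a : N, mul one a = a
  mul_one : ∀ a : N, mul a one = a
  d : N →ₗ[k] N
  d_mem : ∀ {i : ℤ} {a : N}, a ∈ gr i → d a ∈ gr (i + 1)
  d_sq : ∀ a : N, d (d a) = 0
  d_mul : ∀ {i j : ℤ} {a b : N}, a ∈ gr i → b ∈ gr j →
    d (mul a b) = mul (d a) b + ((-1 : k) ^ i) • mul a (d b)

/-- A differential graded Poisson algebra structure on a `k`-vector space `M`. -/
structure DGPAOn (k : Type u) [Field k] (M : Type u) [AddCommGroup M] [Module k M] where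
  gr : ℤ → Submodule k M
  decomp : DirectSum.Decomposition gr
  mul : M →ₗ[k] M →ₗ[k] M
  one : M
  one_mem : one ∈ gr 0
  mul_mem : ∀ {i j : ℤ} {a b : M}, a ∈ gr i → b ∈ gr j → mul a b ∈ gr (i + j)
  mul_assoc : ∀ a b c : M, mul (mul a b) c = mul a (mul b c)
  one_mul : ∀ a : M, mul one a = a
  mul_one : ∀ a : M, mul a one = a
  mul_comm : ∀ {i j : ℤ} {a b : M}, a ∈ gr i → b ∈ gr j →
    mul a b = ((-1 : k) ^ (i * j)) • mul b a
  br : M →ₗ[k] M →ₗ[k] M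
  br_mem : ∀ {i j : ℤ} {a b : M}, a ∈ gr i → b ∈ gr j → br a b ∈ gr (i + j)
  br_antisymm : ∀ {i j : ℤ} {a b : M}, a ∈ gr i → b ∈ gr j →
    br a b = -(((-1 : k) ^ (i * j)) • br b a)
  br_jacobi : ∀ {i j l : ℤ} {a b c : M}, a ∈ gr i → b ∈ gr j → c ∈ gr l →
    br a (br b c) = br (br a b) c + ((-1 : k) ^ (i * j)) • br b (br a c)
  br_deriv : ∀ {i j l : ℤ} {a b c : M}, a ∈ gr i → b ∈ gr j → c ∈ gr l →
    br a (mul b c) = mul (br a b) c + ((-1 : k) ^ (i * j)) • mul b (br a c)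
  d : M →ₗ[k] M
  d_mem : ∀ {i : ℤ} {a : M}, a ∈ gr i → d a ∈ gr (i + 1)
  d_sq : ∀ a : M, d (d a) = 0
  d_br : ∀ {i j : ℤ} {a b : M}, a ∈ gr i → b ∈ gr j →
    d (br a b) = br (d a) b + ((-1 : k) ^ i) • br a (d b)
  d_mul : ∀ {i j : ℤ} {a b : M}, a ∈ gr i → b ∈ gr j →
    d (mul a b) = mul (d a) b + ((-1 : k) ^ i) • mul a (d b)

section Defs

variable {k : Type u} [Field k]

/-- The differential graded Lie algebra underlying a differential graded Poisson algebra. -/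
def DGPAOn.toLie {M : Type u} [AddCommGroup M] [Module k M] (P : DGPAOn k M) :
    DGLAOn k M where
  gr := P.gr
  decomp := P.decomp
  br := P.br
  br_mem := P.br_mem
  br_antisymm := P.br_antisymm
  br_jacobi := P.br_jacobi
  d := P.d
  d_mem := P.d_mem
  d_sq := P.d_sq
  d_br := P.d_br

section Maps

variable {M N : Type u} [AddCommGroup M] [Module k M] [AddCommGroup N] [Module k N]

/-- A morphism of differential graded algebras (degree-0, multiplicative, unital,
commuting with the differentials). -/
def IsDGAHom (E : DGAOn k M) (F : DGAOn k N) (f : M →ₗ[k] N) : Prop :=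
  (∀ {n : ℤ} {x : M}, x ∈ E.gr n → f x ∈ F.gr n) ∧
  (∀ x y : M, f (E.mul x y) = F.mul (f x) (f y)) ∧
  f E.one = F.one ∧
  ∀ x : M, f (E.d x) = F.d (f x)

/-- A morphism of differential graded Poisson algebras. -/
def IsDGPAHom (P : DGPAOn k M) (Q : DGPAOn k N) (f : M →ₗ[k] N) : Prop :=
  (∀ {n : ℤ} {x : M}, x ∈ P.gr n → f x ∈ Q.gr n) ∧
  (∀ x y : M, f (P.mul x y) = Q.mul (f x) (f y)) ∧
  f P.one = Q.one ∧
  (∀ x : M, f (P.d x) = Q.d (f x)) ∧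
  ∀ x y : M, f (P.br x y) = Q.br (f x) (f y)

end Maps

section Tensor

variable {A B : Type u} [AddCommGroup A] [Module k A] [AddCommGroup B] [Module k B]

/-- `R` is the tensor product differential graded Poisson algebra structure on `A ⊗[k] B`
induced by `P` and `Q`. -/
def IsTensorDGPA (P : DGPAOn k A) (Q : DGPAOn k B) (R : DGPAOn k (A ⊗[k] B)) : Prop :=
  (∀ n : ℤ, R.gr n = Submodule.span k {z : A ⊗[k] B |
      ∃ (i j : ℤ) (a : A) (b : B), i + j = n ∧ a ∈ P.gr i ∧ b ∈ Q.gr j ∧ z = a ⊗ₜ[k] b}) ∧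
  R.one = P.one ⊗ₜ[k] Q.one ∧
  (∀ {i j i' j' : ℤ} {a a' : A} {b b' : B},
      a ∈ P.gr i → b ∈ Q.gr j → a' ∈ P.gr i' → b' ∈ Q.gr j' →
    R.mul (a ⊗ₜ[k] b) (a' ⊗ₜ[k] b') = ((-1 : k) ^ (i' * j)) • (P.mul a a' ⊗ₜ[k] Q.mul b b')) ∧
  (∀ {i j : ℤ} {a : A} {b : B}, a ∈ P.gr i → b ∈ Q.gr j →
    R.d (a ⊗ₜ[k] b) = P.d a ⊗ₜ[k] b + ((-1 : k) ^ i) • (a ⊗ₜ[k] Q.d b)) ∧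
  (∀ {i j i' j' : ℤ} {a a' : A} {b b' : B},
      a ∈ P.gr i → b ∈ Q.gr j → a' ∈ P.gr i' → b' ∈ Q.gr j' →
    R.br (a ⊗ₜ[k] b) (a' ⊗ₜ[k] b') =
      ((-1 : k) ^ (i' * j)) • (P.br a a' ⊗ₜ[k] Q.mul b b' + P.mul a a' ⊗ₜ[k] Q.br b b'))

/-- `G` is the tensor product differential graded algebra structure on `A ⊗[k] B`
induced by `E` and `F` (with the Koszul sign rule). -/
def IsTensorDGA (E : DGAOn k A) (F : DGAOn k B) (G : DGAOn k (A ⊗[k] B)) : Prop :=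
  (∀ n : ℤ, G.gr n = Submodule.span k {z : A ⊗[k] B |
      ∃ (i j : ℤ) (x : A) (y : B), i + j = n ∧ x ∈ E.gr i ∧ y ∈ F.gr j ∧ z = x ⊗ₜ[k] y}) ∧
  G.one = E.one ⊗ₜ[k] F.one ∧
  (∀ {i j i' j' : ℤ} {x x' : A} {y y' : B},
      x ∈ E.gr i → y ∈ F.gr j → x' ∈ E.gr i' → y' ∈ F.gr j' →
    G.mul (x ⊗ₜ[k] y) (x' ⊗ₜ[k] y') = ((-1 : k) ^ (i' * j)) • (E.mul x x' ⊗ₜ[k] F.mul y y')) ∧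
  (∀ {i j : ℤ} {x : A} {y : B}, x ∈ E.gr i → y ∈ F.gr j →
    G.d (x ⊗ₜ[k] y) = E.d x ⊗ₜ[k] y + ((-1 : k) ^ i) • (x ⊗ₜ[k] F.d y))

end Tensor

section Env

variable {M : Type u} [AddCommGroup M] [Module k M]

/-- The defining relations of the universal enveloping algebra `A^e` of a differential
graded Poisson algebra, imposed on the tensor algebra of `M × M`; the first copy of `M`
gives the generators `m_a`, the second copy the generators `h_a`. -/
inductive EnvRel (P : DGPAOn k M) :
    TensorAlgebra k (M × M) → TensorAlgebra k (M × M) → Prop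
  | relone : EnvRel P (TensorAlgebra.ι k ((P.one, 0) : M × M)) 1
  | relmul (a b : M) :
      EnvRel P (TensorAlgebra.ι k ((P.mul a b, 0) : M × M))
        (TensorAlgebra.ι k ((a, 0) : M × M) * TensorAlgebra.ι k ((b, 0) : M × M))
  | relhmul {i j : ℤ} {a b : M} (ha : a ∈ P.gr i) (hb : b ∈ P.gr j) :
      EnvRel P (TensorAlgebra.ι k ((0, P.mul a b) : M × M))
        (TensorAlgebra.ι k ((a, 0) : M × M) * TensorAlgebra.ι k ((0, b) : M × M) +
          ((-1 : k) ^ (i * j)) •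
            (TensorAlgebra.ι k ((b, 0) : M × M) * TensorAlgebra.ι k ((0, a) : M × M)))
  | relmbr {i j : ℤ} {a b : M} (ha : a ∈ P.gr i) (hb : b ∈ P.gr j) :
      EnvRel P (TensorAlgebra.ι k ((P.br a b, 0) : M × M))
        (TensorAlgebra.ι k ((0, a) : M × M) * TensorAlgebra.ι k ((b, 0) : M × M) -
          ((-1 : k) ^ (i * j)) •
            (TensorAlgebra.ι k ((b, 0) : M × M) * TensorAlgebra.ι k ((0, a) : M × M)))
  | relhbr {i j : ℤ} {a b : M} (ha : a ∈ P.gr i) (hb : b ∈ P.gr j) :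
      EnvRel P (TensorAlgebra.ι k ((0, P.br a b) : M × M))
        (TensorAlgebra.ι k ((0, a) : M × M) * TensorAlgebra.ι k ((0, b) : M × M) -
          ((-1 : k) ^ (i * j)) •
            (TensorAlgebra.ι k ((0, b) : M × M) * TensorAlgebra.ι k ((0, a) : M × M)))

/-- The universal enveloping algebra `A^e` of a differential graded Poisson algebra,
as a quotient of the tensor algebra on two copies of `A`. -/
abbrev Env (P : DGPAOn k M) : Type u := RingQuot (EnvRel P)

/-- The generators `m_a` of `A^e`. -/
def mgen (P : DGPAOn k M) : M →ₗ[k] Env P :=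
  (RingQuot.mkAlgHom k (EnvRel P)).toLinearMap ∘ₗ
    ((TensorAlgebra.ι k : (M × M) →ₗ[k] TensorAlgebra k (M × M)) ∘ₗ LinearMap.inl k M M)

/-- The generators `h_a` of `A^e`. -/
def hgen (P : DGPAOn k M) : M →ₗ[k] Env P :=
  (RingQuot.mkAlgHom k (EnvRel P)).toLinearMap ∘ₗ
    ((TensorAlgebra.ι k : (M × M) →ₗ[k] TensorAlgebra k (M × M)) ∘ₗ LinearMap.inr k M M)

/-- `E` is the differential graded algebra structure on `A^e`, with the ring
multiplication of `A^e`, grading `|m_a| = |h_a| = |a|` and differential determined by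
`∂(m_a) = m_{d a}`, `∂(h_a) = h_{d a}` and the graded Leibniz rule. -/
def IsEnvDGA (P : DGPAOn k M) (E : DGAOn k (Env P)) : Prop :=
  (∀ x y : Env P, E.mul x y = x * y) ∧
  E.one = 1 ∧
  (∀ {i : ℤ} {a : M}, a ∈ P.gr i → mgen P a ∈ E.gr i) ∧
  (∀ {i : ℤ} {a : M}, a ∈ P.gr i → hgen P a ∈ E.gr i) ∧
  (∀ a : M, E.d (mgen P a) = mgen P (P.d a)) ∧
  (∀ a : M, E.d (hgen P a) = hgen P (P.d a))

end Env

section Lie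

variable {V : Type u} [AddCommGroup V] [Module k V]

/-- The defining relations of the universal enveloping algebra of a differential graded
Lie algebra. -/
inductive LieRel (L : DGLAOn k V) : TensorAlgebra k V → TensorAlgebra k V → Prop
  | rel {i j : ℤ} {a b : V} (ha : a ∈ L.gr i) (hb : b ∈ L.gr j) :
      LieRel L
        (TensorAlgebra.ι k a * TensorAlgebra.ι k b -
          ((-1 : k) ^ (i * j)) • (TensorAlgebra.ι k b * TensorAlgebra.ι k a))
        (TensorAlgebra.ι k (L.br a b))

/-- The universal enveloping algebra `U(L)` of a differential graded Lie algebra `L`. -/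
abbrev ULie (L : DGLAOn k V) : Type u := RingQuot (LieRel L)

/-- The canonical map `L → U(L)`. -/
def uGen (L : DGLAOn k V) : V →ₗ[k] ULie L :=
  (RingQuot.mkAlgHom k (LieRel L)).toLinearMap ∘ₗ TensorAlgebra.ι k

/-- `E` is the differential graded algebra structure of `U(L)`. -/
def IsULieDGA (L : DGLAOn k V) (E : DGAOn k (ULie L)) : Prop :=
  (∀ x y : ULie L, E.mul x y = x * y) ∧
  E.one = 1 ∧
  (∀ {i : ℤ} {a : V}, a ∈ L.gr i → uGen L a ∈ E.gr i) ∧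
  (∀ a : V, E.d (uGen L a) = uGen L (L.d a))

/-- The graded-symmetry relations defining the graded symmetric algebra of `L`. -/
inductive SymRel (L : DGLAOn k V) : TensorAlgebra k V → TensorAlgebra k V → Prop
  | rel {i j : ℤ} {a b : V} (ha : a ∈ L.gr i) (hb : b ∈ L.gr j) :
      SymRel L (TensorAlgebra.ι k a * TensorAlgebra.ι k b)
        (((-1 : k) ^ (i * j)) • (TensorAlgebra.ι k b * TensorAlgebra.ι k a))

/-- The graded symmetric algebra `𝕊L` of a differential graded Lie algebra `L`. -/
abbrev SymAlg (L : DGLAOn k V) : Type u := RingQuot (SymRel L)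

/-- The canonical map `L → 𝕊L`. -/
def sGen (L : DGLAOn k V) : V →ₗ[k] SymAlg L :=
  (RingQuot.mkAlgHom k (SymRel L)).toLinearMap ∘ₗ TensorAlgebra.ι k

/-- `R` is the differential graded Poisson algebra structure on `𝕊L` with differential
extending `d` and bracket extending the Lie bracket of `L` as a graded biderivation. -/
def IsSymDGPA (L : DGLAOn k V) (R : DGPAOn k (SymAlg L)) : Prop :=
  (∀ x y : SymAlg L, R.mul x y = x * y) ∧
  R.one = 1 ∧
  (∀ {i : ℤ} {a : V}, a ∈ L.gr i → sGen L a ∈ R.gr i) ∧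
  (∀ a : V, R.d (sGen L a) = sGen L (L.d a)) ∧
  (∀ a b : V, R.br (sGen L a) (sGen L b) = sGen L (L.br a b))

/-- `S` is the graded semidirect product differential graded Lie algebra `L ⋊ L`. -/
def IsSemidirect (L : DGLAOn k V) (S : DGLAOn k (V × V)) : Prop :=
  (∀ n : ℤ, S.gr n = (L.gr n).prod (L.gr n)) ∧
  (∀ z : V × V, S.d z = (L.d z.1, L.d z.2)) ∧
  (∀ {i j : ℤ} {x₁ x₂ y₁ y₂ : V}, x₁ ∈ L.gr i → x₂ ∈ L.gr i → y₁ ∈ L.gr j → y₂ ∈ L.gr j →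
    S.br (x₁, x₂) (y₁, y₂) =
      (L.br x₂ y₁ - ((-1 : k) ^ (i * j)) • L.br y₂ x₁, L.br x₂ y₂))

end Lie

section Smash

variable {M : Type u} [AddCommGroup M] [Module k M]

/-- The generators `1#(ab) - a#b - (-1)^{|a||b|} b#a` of the ideal defining `A^E`
inside the smash product `A # U(A)`. -/
def smashGens (P : DGPAOn k M) : Set (M ⊗[k] ULie P.toLie) :=
  {z | ∃ (i j : ℤ) (a b : M), a ∈ P.gr i ∧ b ∈ P.gr j ∧
    z = P.one ⊗ₜ[k] uGen P.toLie (P.mul a b) - a ⊗ₜ[k] uGen P.toLie b -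
        ((-1 : k) ^ (i * j)) • (b ⊗ₜ[k] uGen P.toLie a)}

/-- The two-sided ideal generated by a set `T` in a differential graded algebra `S`. -/
def idealGen {N : Type u} [AddCommGroup N] [Module k N] (S : DGAOn k N) (T : Set N) :
    Submodule k N :=
  sInf {I : Submodule k N | T ⊆ I ∧ ∀ x ∈ I, ∀ y : N, S.mul x y ∈ I ∧ S.mul y x ∈ I}

/-- `S` is the smash product differential graded algebra `A # U(A)`. -/
def IsSmash (P : DGPAOn k M) (EU : DGAOn k (ULie P.toLie))
    (S : DGAOn k (M ⊗[k] ULie P.toLie)) : Prop :=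
  S.one = P.one ⊗ₜ[k] (1 : ULie P.toLie) ∧
  (∀ a b : M, S.mul (a ⊗ₜ[k] (1 : ULie P.toLie)) (b ⊗ₜ[k] (1 : ULie P.toLie)) =
      P.mul a b ⊗ₜ[k] (1 : ULie P.toLie)) ∧
  (∀ u v : ULie P.toLie, S.mul (P.one ⊗ₜ[k] u) (P.one ⊗ₜ[k] v) = P.one ⊗ₜ[k] (u * v)) ∧
  (∀ (a : M) (u : ULie P.toLie), S.mul (a ⊗ₜ[k] (1 : ULie P.toLie)) (P.one ⊗ₜ[k] u) =
      a ⊗ₜ[k] u) ∧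
  (∀ {i j : ℤ} {c b : M}, c ∈ P.gr i → b ∈ P.gr j →
    S.mul (P.one ⊗ₜ[k] uGen P.toLie c) (b ⊗ₜ[k] (1 : ULie P.toLie)) =
      P.br c b ⊗ₜ[k] (1 : ULie P.toLie) + ((-1 : k) ^ (i * j)) • (b ⊗ₜ[k] uGen P.toLie c)) ∧
  (∀ {i j : ℤ} {a : M} {u : ULie P.toLie}, a ∈ P.gr i → u ∈ EU.gr j →
      a ⊗ₜ[k] u ∈ S.gr (i + j)) ∧
  (∀ {i : ℤ} {a : M}, a ∈ P.gr i → ∀ u : ULie P.toLie,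
    S.d (a ⊗ₜ[k] u) = P.d a ⊗ₜ[k] u + ((-1 : k) ^ i) • (a ⊗ₜ[k] EU.d u))

/-- `R` is the quotient differential graded algebra structure of `S` by the ideal `I`. -/
def IsQuotDGA {N : Type u} [AddCommGroup N] [Module k N] (S : DGAOn k N)
    (I : Submodule k N) (R : DGAOn k (N ⧸ I)) : Prop :=
  (∀ n : ℤ, R.gr n = Submodule.map I.mkQ (S.gr n)) ∧
  R.one = I.mkQ S.one ∧
  (∀ x y : N, R.mul (I.mkQ x) (I.mkQ y) = I.mkQ (S.mul x y)) ∧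
  (∀ x : N, R.d (I.mkQ x) = I.mkQ (S.d x))

end Smash

section Op

variable {M N : Type u} [AddCommGroup M] [Module k M] [AddCommGroup N] [Module k N]

/-- `P'` is the opposite differential graded Poisson algebra of `P` (the product is
unchanged by graded commutativity, the bracket is negated). -/
def IsOpDGPA (P P' : DGPAOn k M) : Prop :=
  P'.gr = P.gr ∧ (∀ x y : M, P'.mul x y = P.mul x y) ∧ P'.one = P.one ∧ P'.d = P.d ∧
  (∀ x y : M, P'.br x y = - P.br x y)

/-- `E'` is the opposite differential graded algebra of `E` (with the Koszul sign). -/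
def IsOpDGA (E E' : DGAOn k N) : Prop :=
  E'.gr = E.gr ∧ E'.one = E.one ∧ E'.d = E.d ∧
  (∀ {i j : ℤ} {x y : N}, x ∈ E.gr i → y ∈ E.gr j →
    E'.mul x y = ((-1 : k) ^ (i * j)) • E.mul y x)

end Op

section UEnv

variable {M N : Type u} [AddCommGroup M] [Module k M] [AddCommGroup N] [Module k N]

/-- A pair `(f, g)` where `f : A → D` is a differential graded algebra map and
`g : A → D_L` is a differential graded Lie algebra map (into the graded commutator Lie
structure of `D`), satisfying the two compatibility conditions of the universal property
of the universal enveloping algebra of a differential graded Poisson algebra. -/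
def UEPair (P : DGPAOn k M) (D : DGAOn k N) (f g : M →ₗ[k] N) : Prop :=
  (∀ {n : ℤ} {x : M}, x ∈ P.gr n → f x ∈ D.gr n) ∧
  (∀ {n : ℤ} {x : M}, x ∈ P.gr n → g x ∈ D.gr n) ∧
  (∀ a b : M, f (P.mul a b) = D.mul (f a) (f b)) ∧
  f P.one = D.one ∧
  (∀ a : M, f (P.d a) = D.d (f a)) ∧
  (∀ a : M, g (P.d a) = D.d (g a)) ∧
  (∀ {i j : ℤ} {a b : M}, a ∈ P.gr i → b ∈ P.gr j →
    g (P.br a b) = D.mul (g a) (g b) - ((-1 : k) ^ (i * j)) • D.mul (g b) (g a)) ∧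
  (∀ {i j : ℤ} {a b : M}, a ∈ P.gr i → b ∈ P.gr j →
    f (P.br a b) = D.mul (g a) (f b) - ((-1 : k) ^ (i * j)) • D.mul (f b) (g a)) ∧
  (∀ {i j : ℤ} {a b : M}, a ∈ P.gr i → b ∈ P.gr j →
    g (P.mul a b) = D.mul (f a) (g b) + ((-1 : k) ^ (i * j)) • D.mul (f b) (g a))

/-- `(E, α, β)` is a universal enveloping algebra of the differential graded Poisson
algebra `P`. -/
def IsUEnv (P : DGPAOn k M) (E : DGAOn k N) (α β : M →ₗ[k] N) : Prop :=
  UEPair P E α β ∧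
  ∀ (D' : Type u) [AddCommGroup D'] [Module k D'] (D : DGAOn k D') (f g : M →ₗ[k] D'),
    UEPair P D f g →
    ∃! φ : N →ₗ[k] D',
      IsDGAHom E D φ ∧ (∀ a : M, φ (α a) = f a) ∧ (∀ a : M, φ (β a) = g a)

end UEnv

section IdealsQuotients

variable {M : Type u} [AddCommGroup M] [Module k M]

/-- `B` is a differential graded Poisson ideal of `P`. -/
def IsDGPIdeal (P : DGPAOn k M) (B : Submodule k M) : Prop :=
  (B = ⨆ n : ℤ, B ⊓ P.gr n) ∧
  (∀ x ∈ B, P.d x ∈ B) ∧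
  (∀ x ∈ B, ∀ a : M, P.mul x a ∈ B) ∧
  (∀ x ∈ B, ∀ a : M, P.mul a x ∈ B) ∧
  (∀ x ∈ B, ∀ a : M, P.br a x ∈ B)

/-- `B` is a differential graded Poisson subalgebra of `P`. -/
def IsDGPSubalg (P : DGPAOn k M) (B : Submodule k M) : Prop :=
  (B = ⨆ n : ℤ, B ⊓ P.gr n) ∧ P.one ∈ B ∧
  (∀ x ∈ B, ∀ y ∈ B, P.mul x y ∈ B) ∧
  (∀ x ∈ B, P.d x ∈ B) ∧
  (∀ x ∈ B, ∀ y ∈ B, P.br x y ∈ B)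

/-- `R` is the quotient differential graded Poisson algebra structure on `M ⧸ B`. -/
def IsQuotDGPA (P : DGPAOn k M) (B : Submodule k M) (R : DGPAOn k (M ⧸ B)) : Prop :=
  (∀ n : ℤ, R.gr n = Submodule.map B.mkQ (P.gr n)) ∧
  R.one = B.mkQ P.one ∧
  (∀ x y : M, R.mul (B.mkQ x) (B.mkQ y) = B.mkQ (P.mul x y)) ∧
  (∀ x : M, R.d (B.mkQ x) = B.mkQ (P.d x)) ∧
  (∀ x y : M, R.br (B.mkQ x) (B.mkQ y) = B.mkQ (P.br x y))

/-- `S` is the differential graded Poisson algebra structure induced on a differential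
graded Poisson subalgebra `B` of `P`. -/
def IsSubDGPA (P : DGPAOn k M) (B : Submodule k M) (S : DGPAOn k B) : Prop :=
  (∀ n : ℤ, S.gr n = Submodule.comap B.subtype (P.gr n)) ∧
  ((S.one : M) = P.one) ∧
  (∀ x y : B, (S.mul x y : M) = P.mul (x : M) (y : M)) ∧
  (∀ x : B, (S.d x : M) = P.d (x : M)) ∧
  (∀ x y : B, (S.br x y : M) = P.br (x : M) (y : M))

/-- The cocycles `ker d` of a differential graded Poisson algebra. -/
def Cocycles (P : DGPAOn k M) : Submodule k M := LinearMap.ker P.d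

/-- The coboundaries `im d`, viewed inside the cocycles. -/
def CobIn (P : DGPAOn k M) : Submodule k (Cocycles P) :=
  Submodule.comap (Cocycles P).subtype (LinearMap.range P.d)

/-- The cohomology `H(A) = ker d / im d` of a differential graded Poisson algebra. -/
abbrev Cohom (P : DGPAOn k M) : Type u := Cocycles P ⧸ CobIn P

/-- The class map `ker d → H(A)`. -/
def cohCls (P : DGPAOn k M) : Cocycles P →ₗ[k] Cohom P := (CobIn P).mkQ

/-- `R` is the graded Poisson algebra structure on the cohomology of `P` (a differential
graded Poisson algebra structure with zero differential, with the induced grading,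
product and bracket). -/
def IsCohomDGPA (P : DGPAOn k M) (R : DGPAOn k (Cohom P)) : Prop :=
  R.d = 0 ∧
  (∀ n : ℤ, R.gr n =
    Submodule.map (cohCls P) (Submodule.comap (Cocycles P).subtype (P.gr n))) ∧
  (∀ h : P.one ∈ Cocycles P, R.one = cohCls P ⟨P.one, h⟩) ∧
  (∀ (a b : Cocycles P) (h : P.mul (a : M) (b : M) ∈ Cocycles P),
    R.mul (cohCls P a) (cohCls P b) = cohCls P ⟨P.mul (a : M) (b : M), h⟩) ∧
  (∀ (a b : Cocycles P) (h : P.br (a : M) (b : M) ∈ Cocycles P),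
    R.br (cohCls P a) (cohCls P b) = cohCls P ⟨P.br (a : M) (b : M), h⟩)

end IdealsQuotients

end Defs

section ModuleDefs

variable {k : Type u} [Field k]

/-- A left differential graded module structure on `X` over the differential graded
algebra `E`. -/
structure DGModOn {N : Type u} [AddCommGroup N] [Module k N] (E : DGAOn k N)
    (X : Type u) [AddCommGroup X] [Module k X] where
  grm : ℤ → Submodule k X
  decomp : DirectSum.Decomposition grm
  act : N →ₗ[k] X →ₗ[k] X
  act_one : ∀ x : X, act E.one x = x
  act_mul : ∀ (r s : N) (x : X), act (E.mul r s) x = act r (act s x)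
  act_mem : ∀ {i j : ℤ} {r : N} {x : X}, r ∈ E.gr i → x ∈ grm j → act r x ∈ grm (i + j)
  dm : X →ₗ[k] X
  dm_mem : ∀ {i : ℤ} {x : X}, x ∈ grm i → dm x ∈ grm (i + 1)
  dm_sq : ∀ x : X, dm (dm x) = 0
  dm_act : ∀ {i : ℤ} {r : N}, r ∈ E.gr i → ∀ x : X,
    dm (act r x) = act (E.d r) x + ((-1 : k) ^ i) • act r (dm x)

/-- A left differential graded Poisson module structure on `X` over the differential
graded Poisson algebra `P`. -/
structure DGPModOn {M : Type u} [AddCommGroup M] [Module k M] (P : DGPAOn k M)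
    (X : Type u) [AddCommGroup X] [Module k X] where
  grm : ℤ → Submodule k X
  decomp : DirectSum.Decomposition grm
  act : M →ₗ[k] X →ₗ[k] X
  act_one : ∀ x : X, act P.one x = x
  act_mul : ∀ (a b : M) (x : X), act (P.mul a b) x = act a (act b x)
  act_mem : ∀ {i j : ℤ} {a : M} {x : X}, a ∈ P.gr i → x ∈ grm j → act a x ∈ grm (i + j)
  dm : X →ₗ[k] X
  dm_mem : ∀ {i : ℤ} {x : X}, x ∈ grm i → dm x ∈ grm (i + 1)
  dm_sq : ∀ x : X, dm (dm x) = 0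
  dm_act : ∀ {i : ℤ} {a : M}, a ∈ P.gr i → ∀ x : X,
    dm (act a x) = act (P.d a) x + ((-1 : k) ^ i) • act a (dm x)
  bact : M →ₗ[k] X →ₗ[k] X
  bact_mem : ∀ {i j : ℤ} {a : M} {x : X}, a ∈ P.gr i → x ∈ grm j → bact a x ∈ grm (i + j)
  bact_amod : ∀ {i j : ℤ} {a b : M}, a ∈ P.gr i → b ∈ P.gr j → ∀ x : X,
    bact a (act b x) = act (P.br a b) x + ((-1 : k) ^ (i * j)) • act b (bact a x)
  bact_mulact : ∀ {i j : ℤ} {a b : M}, a ∈ P.gr i → b ∈ P.gr j → ∀ x : X,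
    bact (P.mul a b) x = act a (bact b x) + ((-1 : k) ^ (i * j)) • act b (bact a x)
  bact_jacobi : ∀ {i j : ℤ} {a b : M}, a ∈ P.gr i → b ∈ P.gr j → ∀ x : X,
    bact a (bact b x) = bact (P.br a b) x + ((-1 : k) ^ (i * j)) • bact b (bact a x)
  dm_bact : ∀ {i : ℤ} {a : M}, a ∈ P.gr i → ∀ x : X,
    dm (bact a x) = bact (P.d a) x + ((-1 : k) ^ i) • bact a (dm x)

/-- A morphism of left differential graded modules. -/
def IsDGModHom {N X Y : Type u} [AddCommGroup N] [Module k N]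
    [AddCommGroup X] [Module k X] [AddCommGroup Y] [Module k Y]
    {E : DGAOn k N} (W : DGModOn E X) (W' : DGModOn E Y) (f : X →ₗ[k] Y) : Prop :=
  (∀ {n : ℤ} {x : X}, x ∈ W.grm n → f x ∈ W'.grm n) ∧
  (∀ x : X, f (W.dm x) = W'.dm (f x)) ∧
  (∀ (r : N) (x : X), f (W.act r x) = W'.act r (f x))

/-- A morphism of left differential graded Poisson modules. -/
def IsDGPModHom {M X Y : Type u} [AddCommGroup M] [Module k M]
    [AddCommGroup X] [Module k X] [AddCommGroup Y] [Module k Y]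
    {P : DGPAOn k M} (V : DGPModOn P X) (V' : DGPModOn P Y) (f : X →ₗ[k] Y) : Prop :=
  (∀ {n : ℤ} {x : X}, x ∈ V.grm n → f x ∈ V'.grm n) ∧
  (∀ x : X, f (V.dm x) = V'.dm (f x)) ∧
  (∀ (a : M) (x : X), f (V.act a x) = V'.act a (f x)) ∧
  (∀ (a : M) (x : X), f (V.bact a x) = V'.bact a (f x))

/-- The correspondence between a differential graded Poisson module structure over `P`
and a differential graded module structure over `A^e` on the same space. -/
def ModCorr {M X : Type u} [AddCommGroup M] [Module k M] [AddCommGroup X] [Module k X]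
    {P : DGPAOn k M} {E : DGAOn k (Env P)}
    (V : DGPModOn P X) (W : DGModOn E X) : Prop :=
  W.grm = V.grm ∧ W.dm = V.dm ∧
  (∀ (a : M) (x : X), W.act (mgen P a) x = V.act a x) ∧
  (∀ (a : M) (x : X), W.act (hgen P a) x = V.bact a x)

end ModuleDefs

/-!
The algebra `A^e` is generated by the elements `m_a` and `h_a` and is universal among differential
graded algebras with such a pair of maps. A pair for `A^{op}` into `D` is the same as a pair for
`A` into `D^{op}`, so `(A^e)^{op}` is an enveloping algebra of `A^{op}`. For two Poisson algebras,
`m ⊗ m` and `m ⊗ h + h ⊗ m` make `A^e ⊗ B^e` an enveloping algebra of `A ⊗ B`: a pair on `A ⊗ B`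
restricts to pairs on `A` and `B`, and the two induced maps multiply to a map on `A^e ⊗ B^e`
because their images graded-commute. This is checked on generators, where it says that
`{a ⊗ 1, 1 ⊗ b} = 0`. Taking `B = A^{op}`, the two sides of the isomorphism are enveloping algebras
of the same Poisson algebra.
-/

section Homogeneous

variable {ι R M N L : Type*} [DecidableEq ι] [CommRing R]
  [AddCommGroup M] [Module R M] [AddCommGroup N] [Module R N] [AddCommGroup L] [Module R L]

theorem linearMap_ext_of_homogeneous (𝒜 : ι → Submodule R M) [DirectSum.Decomposition 𝒜]
    {f g : M →ₗ[R] L} (h : ∀ i, ∀ x ∈ 𝒜 i, f x = g x) : f = g :=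
  DirectSum.decompose_lhom_ext 𝒜 fun i => LinearMap.ext fun x => h i x x.2

theorem bilinMap_ext_of_homogeneous (𝒜 : ι → Submodule R M) (ℬ : ι → Submodule R N)
    [DirectSum.Decomposition 𝒜] [DirectSum.Decomposition ℬ] {f g : M →ₗ[R] N →ₗ[R] L}
    (h : ∀ i j, ∀ x ∈ 𝒜 i, ∀ y ∈ ℬ j, f x y = g x y) : f = g :=
  linearMap_ext_of_homogeneous 𝒜 fun i x hx =>
    linearMap_ext_of_homogeneous ℬ fun j y hy => h i j x hx y hy

theorem tensorMap_ext_of_homogeneous (𝒜 : ι → Submodule R M) (ℬ : ι → Submodule R N)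
    [DirectSum.Decomposition 𝒜] [DirectSum.Decomposition ℬ] {f g : M ⊗[R] N →ₗ[R] L}
    (h : ∀ i j, ∀ x ∈ 𝒜 i, ∀ y ∈ ℬ j, f (x ⊗ₜ y) = g (x ⊗ₜ y)) : f = g :=
  TensorProduct.ext (bilinMap_ext_of_homogeneous 𝒜 ℬ h)

theorem tensorBilinMap_ext_of_homogeneous (𝒜 : ι → Submodule R M) (ℬ : ι → Submodule R N)
    [DirectSum.Decomposition 𝒜] [DirectSum.Decomposition ℬ]
    {f g : M ⊗[R] N →ₗ[R] M ⊗[R] N →ₗ[R] L}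
    (h : ∀ i j, ∀ x ∈ 𝒜 i, ∀ y ∈ ℬ j, ∀ i' j', ∀ x' ∈ 𝒜 i', ∀ y' ∈ ℬ j',
      f (x ⊗ₜ y) (x' ⊗ₜ y') = g (x ⊗ₜ y) (x' ⊗ₜ y')) : f = g :=
  tensorMap_ext_of_homogeneous 𝒜 ℬ fun i j x hx y hy =>
    tensorMap_ext_of_homogeneous 𝒜 ℬ fun i' j' x' hx' y' hy' =>
      h i j x hx y hy i' j' x' hx' y' hy'

theorem map_mem_iSup_of_homogeneous (𝒜 : ι → Submodule R M) [DirectSum.Decomposition 𝒜]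
    {f : M →ₗ[R] L} {ℋ : ι → Submodule R L} (h : ∀ i, ∀ x ∈ 𝒜 i, f x ∈ ℋ i) (x : M) :
    f x ∈ ⨆ i, ℋ i := by
  have htop : ⨆ i, 𝒜 i = ⊤ := (DirectSum.Decomposition.isInternal 𝒜).submodule_iSup_eq_top
  have hle : ⨆ i, 𝒜 i ≤ (⨆ i, ℋ i).comap f :=
    iSup_le fun i x hx => Submodule.mem_iSup_of_mem i (h i x hx)
  exact hle (htop ▸ Submodule.mem_top)

end Homogeneous

section TensorGrading

variable {R M N L : Type*} [CommRing R] [AddCommGroup M] [Module R M] [AddCommGroup N]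
  [Module R N] [AddCommGroup L] [Module R L]
  {𝒜 : ℤ → Submodule R M} {ℬ : ℤ → Submodule R N}

/-- The total grading on `M ⊗ N` induced by gradings on `M` and `N`. It is spelled exactly as in
`IsTensorDGA` and `IsTensorDGPA`. -/
def tensorGrading (𝒜 : ℤ → Submodule R M) (ℬ : ℤ → Submodule R N) (n : ℤ) :
    Submodule R (M ⊗[R] N) :=
  Submodule.span R {z | ∃ (i j : ℤ) (a : M) (b : N),
    i + j = n ∧ a ∈ 𝒜 i ∧ b ∈ ℬ j ∧ z = a ⊗ₜ[R] b}

theorem tmul_mem_tensorGrading {i j : ℤ} {a : M} {b : N} (ha : a ∈ 𝒜 i) (hb : b ∈ ℬ j) :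
    a ⊗ₜ[R] b ∈ tensorGrading 𝒜 ℬ (i + j) :=
  Submodule.subset_span ⟨i, j, a, b, rfl, ha, hb, rfl⟩

theorem tensorGrading_le {n : ℤ} {S : Submodule R (M ⊗[R] N)}
    (h : ∀ i j a b, i + j = n → a ∈ 𝒜 i → b ∈ ℬ j → a ⊗ₜ[R] b ∈ S) :
    tensorGrading 𝒜 ℬ n ≤ S := by
  refine Submodule.span_le.2 ?_
  rintro _ ⟨i, j, a, b, hij, ha, hb, rfl⟩
  exact h i j a b hij ha hb

theorem bilinMap_eq_on_tensorGrading {f g : M ⊗[R] N →ₗ[R] M ⊗[R] N →ₗ[R] L} {m n : ℤ}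
    (h : ∀ i j a b, i + j = m → a ∈ 𝒜 i → b ∈ ℬ j →
      ∀ i' j' a' b', i' + j' = n → a' ∈ 𝒜 i' → b' ∈ ℬ j' →
        f (a ⊗ₜ b) (a' ⊗ₜ b') = g (a ⊗ₜ b) (a' ⊗ₜ b'))
    {x y : M ⊗[R] N} (hx : x ∈ tensorGrading 𝒜 ℬ m) (hy : y ∈ tensorGrading 𝒜 ℬ n) :
    f x y = g x y := by
  refine tensorGrading_le (S := LinearMap.eqLocus (f.flip y) (g.flip y)) ?_ hx
  intro i j a b hij ha hb
  exact tensorGrading_le (S := LinearMap.eqLocus (f (a ⊗ₜ b)) (g (a ⊗ₜ b)))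
    (h i j a b hij ha hb) hy

end TensorGrading

variable {k : Type u} [Field k]

theorem neg_one_zpow_mul_self (n : ℤ) : (-1 : k) ^ n * (-1) ^ n = 1 := by
  rw [← mul_zpow]
  simp

theorem neg_one_zpow_smul_smul {V : Type*} [AddCommGroup V] [Module k V] (n : ℤ) (x : V) :
    (-1 : k) ^ n • (-1 : k) ^ n • x = x := by
  rw [smul_smul, neg_one_zpow_mul_self, one_smul]

attribute [local instance] DGAOn.decomp DGPAOn.decomp

section DGA

variable {N L : Type u} [AddCommGroup N] [Module k N] [AddCommGroup L] [Module k L]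

namespace DGAOn

variable (D : DGAOn k N)

theorem d_one : D.d D.one = 0 := by
  have h := D.d_mul D.one_mem D.one_mem
  simpa [D.one_mul, D.mul_one] using h

/-- The graded commutator `[x, y] = xy - (-1)^{ij} yx` of elements of degrees `i` and `j`. The
degrees are arguments, so that the commutator is bilinear on the whole algebra; it is meaningful
only on elements of these degrees. -/
def gradedComm (i j : ℤ) : N →ₗ[k] N →ₗ[k] N := D.mul - ((-1 : k) ^ (i * j)) • D.mul.flip

theorem gradedComm_apply (i j : ℤ) (x y : N) :
    D.gradedComm i j x y = D.mul x y - ((-1 : k) ^ (i * j)) • D.mul y x := rfl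

theorem gradedComm_swap (i j : ℤ) (x y : N) :
    D.gradedComm i j x y = -((-1 : k) ^ (i * j) • D.gradedComm j i y x) := by
  simp only [gradedComm_apply, mul_comm j i, smul_sub, neg_one_zpow_smul_smul, neg_sub]

theorem neg_one_zpow_smul_mul (i j : ℤ) (x y : N) :
    (-1 : k) ^ (i * j) • D.mul y x = D.mul x y - D.gradedComm i j x y := by
  rw [gradedComm_apply, sub_sub_cancel]

theorem gradedComm_one_left (j : ℤ) (y : N) : D.gradedComm 0 j D.one y = 0 := by
  simp [gradedComm_apply, D.one_mul, D.mul_one]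

theorem gradedComm_mul_left (i i' j : ℤ) (x x' y : N) :
    D.gradedComm (i + i') j (D.mul x x') y =
      D.mul x (D.gradedComm i' j x' y) +
        (-1 : k) ^ (i' * j) • D.mul (D.gradedComm i j x y) x' := by
  simp only [gradedComm_apply, map_sub, map_smul, LinearMap.sub_apply, LinearMap.smul_apply,
    D.mul_assoc, add_mul, zpow_add₀ (neg_ne_zero.2 (one_ne_zero (α := k)))]
  module

/-- The product `x ⋆ y = (-1)^{ij} yx` of the opposite differential graded algebra, extended
bilinearly from homogeneous elements. -/
def opMul : N →ₗ[k] N →ₗ[k] N :=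
  (DirectSum.toModule k ℤ _ fun i =>
    (DirectSum.toModule k ℤ (D.gr i →ₗ[k] N) fun j =>
      (-1 : k) ^ (i * j) • D.mul.domRestrict₁₂ (D.gr j) (D.gr i)).flip).compl₁₂
    (DirectSum.decomposeLinearEquiv D.gr).toLinearMap
    (DirectSum.decomposeLinearEquiv D.gr).toLinearMap

theorem opMul_apply {i j : ℤ} {x y : N} (hx : x ∈ D.gr i) (hy : y ∈ D.gr j) :
    D.opMul x y = (-1 : k) ^ (i * j) • D.mul y x := by
  simp only [opMul, LinearMap.compl₁₂_apply, LinearEquiv.coe_coe,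
    DirectSum.decomposeLinearEquiv_apply, DirectSum.decompose_of_mem D.gr hx,
    DirectSum.decompose_of_mem D.gr hy, ← DirectSum.lof_eq_of k, DirectSum.toModule_lof,
    LinearMap.flip_apply, LinearMap.smul_apply, LinearMap.domRestrict₁₂_apply]

theorem opMul_assoc (x y z : N) : D.opMul (D.opMul x y) z = D.opMul x (D.opMul y z) := by
  suffices h : D.opMul.compr₂ D.opMul = (LinearMap.llcomp k N N N ∘ₗ D.opMul).compl₂ D.opMul from
    congr($h x y z)
  refine bilinMap_ext_of_homogeneous D.gr D.gr fun i j x hx y hy =>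
    linearMap_ext_of_homogeneous D.gr fun l z hz => ?_
  change D.opMul (D.opMul x y) z = D.opMul x (D.opMul y z)
  rw [D.opMul_apply hx hy, D.opMul_apply hy hz, map_smul, map_smul, LinearMap.smul_apply,
    D.opMul_apply (D.mul_mem hy hx) hz, D.opMul_apply hx (D.mul_mem hz hy), D.mul_assoc,
    smul_smul, smul_smul, ← zpow_add₀ (by simp), ← zpow_add₀ (by simp)]
  congr 2
  ring

theorem one_opMul (x : N) : D.opMul D.one x = x := by
  suffices h : D.opMul D.one = LinearMap.id from congr($h x)
  exact linearMap_ext_of_homogeneous D.gr fun i x hx => by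
    simp [D.opMul_apply D.one_mem hx, D.mul_one]

theorem opMul_one (x : N) : D.opMul x D.one = x := by
  suffices h : D.opMul.flip D.one = LinearMap.id from congr($h x)
  exact linearMap_ext_of_homogeneous D.gr fun i x hx => by
    simp [D.opMul_apply hx D.one_mem, D.one_mul]

theorem opMul_mem {i j : ℤ} {x y : N} (hx : x ∈ D.gr i) (hy : y ∈ D.gr j) :
    D.opMul x y ∈ D.gr (i + j) := by
  rw [D.opMul_apply hx hy, add_comm]
  exact Submodule.smul_mem _ _ (D.mul_mem hy hx)

theorem d_opMul {i j : ℤ} {x y : N} (hx : x ∈ D.gr i) (hy : y ∈ D.gr j) :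
    D.d (D.opMul x y) = D.opMul (D.d x) y + (-1 : k) ^ i • D.opMul x (D.d y) := by
  rw [D.opMul_apply hx hy, D.opMul_apply (D.d_mem hx) hy, D.opMul_apply hx (D.d_mem hy), map_smul,
    D.d_mul hy hx, show (i + 1) * j = i * j + j by ring, show i * (j + 1) = i * j + i by ring,
    zpow_add₀ (by simp), zpow_add₀ (by simp)]
  linear_combination (norm := module)
    -((-1 : k) ^ (i * j)) • neg_one_zpow_mul_self (k := k) i • D.mul (D.d y) x

/-- The opposite differential graded algebra, in which `x ⋆ y = (-1)^{|x||y|} yx`. -/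
def op : DGAOn k N where
  gr := D.gr
  decomp := D.decomp
  mul := D.opMul
  one := D.one
  one_mem := D.one_mem
  mul_mem := D.opMul_mem
  mul_assoc := D.opMul_assoc
  one_mul := D.one_opMul
  mul_one := D.opMul_one
  d := D.d
  d_mem := D.d_mem
  d_sq := D.d_sq
  d_mul := D.d_opMul

theorem isOpDGA_op : IsOpDGA D D.op := ⟨rfl, rfl, rfl, D.opMul_apply⟩

end DGAOn

namespace IsOpDGA

variable {E E' : DGAOn k N}

theorem gr_eq (h : IsOpDGA E E') : E'.gr = E.gr := h.1

theorem one_eq (h : IsOpDGA E E') : E'.one = E.one := h.2.1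

theorem d_eq (h : IsOpDGA E E') : E'.d = E.d := h.2.2.1

theorem mul_eq (h : IsOpDGA E E') {i j : ℤ} {x y : N} (hx : x ∈ E.gr i) (hy : y ∈ E.gr j) :
    E'.mul x y = (-1 : k) ^ (i * j) • E.mul y x :=
  h.2.2.2 hx hy

theorem symm (h : IsOpDGA E E') : IsOpDGA E' E := by
  refine ⟨h.gr_eq.symm, h.one_eq.symm, h.d_eq.symm, fun {i j x y} hx hy => ?_⟩
  rw [h.gr_eq] at hx hy
  rw [h.mul_eq hy hx, mul_comm j i, neg_one_zpow_smul_smul]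

theorem gradedComm_eq (h : IsOpDGA E E') {i j : ℤ} {x y : N} (hx : x ∈ E.gr i) (hy : y ∈ E.gr j) :
    E'.gradedComm i j x y = -E.gradedComm i j x y := by
  rw [DGAOn.gradedComm_apply, DGAOn.gradedComm_apply, h.mul_eq hx hy, h.mul_eq hy hx,
    mul_comm j i, neg_one_zpow_smul_smul, neg_sub]

end IsOpDGA

namespace IsDGAHom

variable {X : Type u} [AddCommGroup X] [Module k X] {E : DGAOn k N} {F : DGAOn k L}
  {H : DGAOn k X} {φ : N →ₗ[k] L} {ψ : L →ₗ[k] X}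

theorem map_mem (h : IsDGAHom E F φ) {n : ℤ} {x : N} (hx : x ∈ E.gr n) : φ x ∈ F.gr n := h.1 hx

theorem map_mul (h : IsDGAHom E F φ) (x y : N) : φ (E.mul x y) = F.mul (φ x) (φ y) := h.2.1 x y

theorem map_one (h : IsDGAHom E F φ) : φ E.one = F.one := h.2.2.1

theorem map_d (h : IsDGAHom E F φ) (x : N) : φ (E.d x) = F.d (φ x) := h.2.2.2 x

theorem id (E : DGAOn k N) : IsDGAHom E E LinearMap.id :=
  ⟨fun hx => hx, fun _ _ => rfl, rfl, fun _ => rfl⟩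

theorem comp (hψ : IsDGAHom F H ψ) (hφ : IsDGAHom E F φ) : IsDGAHom E H (ψ ∘ₗ φ) :=
  ⟨fun hx => hψ.map_mem (hφ.map_mem hx), fun x y => by simp [hφ.map_mul, hψ.map_mul],
    by simp [hφ.map_one, hψ.map_one], fun x => by simp [hφ.map_d, hψ.map_d]⟩

theorem op (h : IsDGAHom E F φ) {E' : DGAOn k N} {F' : DGAOn k L} (hE : IsOpDGA E E')
    (hF : IsOpDGA F F') : IsDGAHom E' F' φ := by
  refine ⟨fun hx => ?_, fun x y => ?_, by rw [hE.one_eq, hF.one_eq, h.map_one],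
    fun x => by rw [hE.d_eq, hF.d_eq, h.map_d]⟩
  · rw [hF.gr_eq]
    exact h.map_mem (hE.gr_eq ▸ hx)
  · suffices e : E'.mul.compr₂ φ = F'.mul.compl₁₂ φ φ from congr($e x y)
    refine bilinMap_ext_of_homogeneous E.gr E.gr fun i j x hx y hy => ?_
    simp only [LinearMap.compr₂_apply, LinearMap.compl₁₂_apply, hE.mul_eq hx hy,
      hF.mul_eq (h.map_mem hx) (h.map_mem hy), map_smul, h.map_mul]

end IsDGAHom

end DGA

section Poisson

variable {M N L : Type u} [AddCommGroup M] [Module k M] [AddCommGroup N] [Module k N]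
  [AddCommGroup L] [Module k L]

namespace DGPAOn

variable (P : DGPAOn k M)

/-- The differential graded algebra underlying a differential graded Poisson algebra. -/
def toDGA : DGAOn k M where
  gr := P.gr
  decomp := P.decomp
  mul := P.mul
  one := P.one
  one_mem := P.one_mem
  mul_mem := P.mul_mem
  mul_assoc := P.mul_assoc
  one_mul := P.one_mul
  mul_one := P.mul_one
  d := P.d
  d_mem := P.d_mem
  d_sq := P.d_sq
  d_mul := P.d_mul

theorem br_one (x : M) : P.br x P.one = 0 := by
  suffices h : P.br.flip P.one = 0 from congr($h x)
  refine linearMap_ext_of_homogeneous P.gr fun i a ha => ?_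
  simpa [P.one_mul, P.mul_one] using P.br_deriv ha P.one_mem P.one_mem

theorem one_br (x : M) : P.br P.one x = 0 := by
  suffices h : P.br P.one = 0 from congr($h x)
  refine linearMap_ext_of_homogeneous P.gr fun i a ha => ?_
  simp [P.br_antisymm P.one_mem ha, P.br_one]

end DGPAOn

namespace IsOpDGPA

variable {P P' : DGPAOn k M}

theorem gr_eq (h : IsOpDGPA P P') : P'.gr = P.gr := h.1

theorem mul_eq (h : IsOpDGPA P P') (a b : M) : P'.mul a b = P.mul a b := h.2.1 a b

theorem one_eq (h : IsOpDGPA P P') : P'.one = P.one := h.2.2.1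

theorem d_eq (h : IsOpDGPA P P') : P'.d = P.d := h.2.2.2.1

theorem br_eq (h : IsOpDGPA P P') (a b : M) : P'.br a b = -P.br a b := h.2.2.2.2 a b

theorem symm (h : IsOpDGPA P P') : IsOpDGPA P' P :=
  ⟨h.gr_eq.symm, fun a b => (h.mul_eq a b).symm, h.one_eq.symm, h.d_eq.symm, fun a b => by
    rw [h.br_eq, neg_neg]⟩

end IsOpDGPA

namespace UEPair

variable {P : DGPAOn k M} {D : DGAOn k N} {f g : M →ₗ[k] N}

theorem fst_mem (h : UEPair P D f g) {n : ℤ} {a : M} (ha : a ∈ P.gr n) : f a ∈ D.gr n := h.1 ha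

theorem snd_mem (h : UEPair P D f g) {n : ℤ} {a : M} (ha : a ∈ P.gr n) : g a ∈ D.gr n := h.2.1 ha

theorem fst_mul (h : UEPair P D f g) (a b : M) : f (P.mul a b) = D.mul (f a) (f b) := h.2.2.1 a b

theorem fst_one (h : UEPair P D f g) : f P.one = D.one := h.2.2.2.1

theorem fst_d (h : UEPair P D f g) (a : M) : f (P.d a) = D.d (f a) := h.2.2.2.2.1 a

theorem snd_d (h : UEPair P D f g) (a : M) : g (P.d a) = D.d (g a) := h.2.2.2.2.2.1 a

theorem gradedComm_snd_snd (h : UEPair P D f g) {i j : ℤ} {a b : M} (ha : a ∈ P.gr i)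
    (hb : b ∈ P.gr j) : D.gradedComm i j (g a) (g b) = g (P.br a b) :=
  (h.2.2.2.2.2.2.1 ha hb).symm

theorem gradedComm_snd_fst (h : UEPair P D f g) {i j : ℤ} {a b : M} (ha : a ∈ P.gr i)
    (hb : b ∈ P.gr j) : D.gradedComm i j (g a) (f b) = f (P.br a b) :=
  (h.2.2.2.2.2.2.2.1 ha hb).symm

theorem snd_mul (h : UEPair P D f g) {i j : ℤ} {a b : M} (ha : a ∈ P.gr i) (hb : b ∈ P.gr j) :
    g (P.mul a b) = D.mul (f a) (g b) + (-1 : k) ^ (i * j) • D.mul (f b) (g a) :=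
  h.2.2.2.2.2.2.2.2 ha hb

theorem gradedComm_fst_fst (h : UEPair P D f g) {i j : ℤ} {a b : M} (ha : a ∈ P.gr i)
    (hb : b ∈ P.gr j) : D.gradedComm i j (f a) (f b) = 0 := by
  rw [DGAOn.gradedComm_apply, ← h.fst_mul, ← h.fst_mul, P.mul_comm ha hb, map_smul, sub_self]

theorem gradedComm_fst_snd (h : UEPair P D f g) {i j : ℤ} {a b : M} (ha : a ∈ P.gr i)
    (hb : b ∈ P.gr j) : D.gradedComm i j (f a) (g b) = f (P.br a b) := by
  rw [DGAOn.gradedComm_swap, h.gradedComm_snd_fst hb ha, P.br_antisymm ha hb, map_neg, map_smul]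

theorem snd_one (h : UEPair P D f g) : g P.one = 0 := by
  simpa [P.one_mul, h.fst_one, D.one_mul] using h.snd_mul P.one_mem P.one_mem

theorem fst_mul_snd_add_snd_mul_fst (h : UEPair P D f g) {i j : ℤ} {a b : M} (ha : a ∈ P.gr i)
    (hb : b ∈ P.gr j) :
    D.mul (f a) (g b) + D.mul (g a) (f b) = g (P.mul a b) + f (P.br a b) := by
  rw [h.snd_mul ha hb, D.neg_one_zpow_smul_mul, h.gradedComm_snd_fst ha hb]
  abel

/-- The relation for `g (ab)` may be traded for the one without signs in
`UEPair.fst_mul_snd_add_snd_mul_fst`. -/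
theorem of_gradedComm
    (fst_mem : ∀ {n : ℤ} {a : M}, a ∈ P.gr n → f a ∈ D.gr n)
    (snd_mem : ∀ {n : ℤ} {a : M}, a ∈ P.gr n → g a ∈ D.gr n)
    (fst_mul : ∀ a b, f (P.mul a b) = D.mul (f a) (f b)) (fst_one : f P.one = D.one)
    (fst_d : ∀ a, f (P.d a) = D.d (f a)) (snd_d : ∀ a, g (P.d a) = D.d (g a))
    (gradedComm_snd_snd : ∀ {i j : ℤ} {a b : M}, a ∈ P.gr i → b ∈ P.gr j →
      D.gradedComm i j (g a) (g b) = g (P.br a b))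
    (gradedComm_snd_fst : ∀ {i j : ℤ} {a b : M}, a ∈ P.gr i → b ∈ P.gr j →
      D.gradedComm i j (g a) (f b) = f (P.br a b))
    (fst_mul_snd_add_snd_mul_fst : ∀ {i j : ℤ} {a b : M}, a ∈ P.gr i → b ∈ P.gr j →
      D.mul (f a) (g b) + D.mul (g a) (f b) = g (P.mul a b) + f (P.br a b)) :
    UEPair P D f g := by
  refine ⟨fst_mem, snd_mem, fst_mul, fst_one, fst_d, snd_d,
    fun ha hb => (gradedComm_snd_snd ha hb).symm, fun ha hb => (gradedComm_snd_fst ha hb).symm,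
    fun ha hb => ?_⟩
  rw [D.neg_one_zpow_smul_mul, gradedComm_snd_fst ha hb, add_sub,
    fst_mul_snd_add_snd_mul_fst ha hb, add_sub_cancel_right]

theorem fst_mul_op (h : UEPair P D f g) {D' : DGAOn k N} (hD : IsOpDGA D D') (a b : M) :
    f (P.mul a b) = D'.mul (f a) (f b) := by
  suffices e : P.mul.compr₂ f = D'.mul.compl₁₂ f f from congr($e a b)
  refine bilinMap_ext_of_homogeneous P.gr P.gr fun i j a ha b hb => ?_
  simp only [LinearMap.compr₂_apply, LinearMap.compl₁₂_apply,
    hD.mul_eq (h.fst_mem ha) (h.fst_mem hb), P.mul_comm ha hb, map_smul, h.fst_mul]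

theorem fst_mul_snd_add_snd_mul_fst_op (h : UEPair P D f g) {D' : DGAOn k N} (hD : IsOpDGA D D')
    {i j : ℤ} {a b : M} (ha : a ∈ P.gr i) (hb : b ∈ P.gr j) :
    D'.mul (f a) (g b) + D'.mul (g a) (f b) = g (P.mul a b) - f (P.br a b) := by
  rw [hD.mul_eq (h.fst_mem ha) (h.snd_mem hb), hD.mul_eq (h.snd_mem ha) (h.fst_mem hb),
    ← smul_add, add_comm, h.fst_mul_snd_add_snd_mul_fst hb ha, P.mul_comm ha hb,
    P.br_antisymm ha hb, smul_add, map_neg, map_smul, map_smul, sub_neg_eq_add]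

theorem op (h : UEPair P D f g) {P' : DGPAOn k M} {D' : DGAOn k N} (hP : IsOpDGPA P P')
    (hD : IsOpDGA D D') : UEPair P' D' f g := by
  apply of_gradedComm <;> simp only [hP.gr_eq, hD.gr_eq, hP.one_eq, hD.one_eq, hP.d_eq, hD.d_eq,
    hP.mul_eq, hP.br_eq, map_neg, ← sub_eq_add_neg]
  · exact h.fst_mem
  · exact h.snd_mem
  · exact h.fst_mul_op hD
  · exact h.fst_one
  · exact h.fst_d
  · exact h.snd_d
  · intro i j a b ha hb
    rw [hD.gradedComm_eq (h.snd_mem ha) (h.snd_mem hb), h.gradedComm_snd_snd ha hb]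
  · intro i j a b ha hb
    rw [hD.gradedComm_eq (h.snd_mem ha) (h.fst_mem hb), h.gradedComm_snd_fst ha hb]
  · exact h.fst_mul_snd_add_snd_mul_fst_op hD

theorem comp_dgpaHom {Q : DGPAOn k L} {θ : L →ₗ[k] M} (h : UEPair P D f g)
    (hθ : IsDGPAHom Q P θ) : UEPair Q D (f ∘ₗ θ) (g ∘ₗ θ) := by
  obtain ⟨map_mem, map_mul, map_one, map_d, map_br⟩ := hθ
  apply of_gradedComm <;> simp only [LinearMap.comp_apply, map_mul, map_one, map_d, map_br]
  · exact fun ha => h.fst_mem (map_mem ha)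
  · exact fun ha => h.snd_mem (map_mem ha)
  · exact fun a b => h.fst_mul _ _
  · exact h.fst_one
  · exact fun a => h.fst_d _
  · exact fun a => h.snd_d _
  · exact fun ha hb => h.gradedComm_snd_snd (map_mem ha) (map_mem hb)
  · exact fun ha hb => h.gradedComm_snd_fst (map_mem ha) (map_mem hb)
  · exact fun ha hb => h.fst_mul_snd_add_snd_mul_fst (map_mem ha) (map_mem hb)

end UEPair

namespace IsUEnv

variable {P : DGPAOn k M} {E : DGAOn k N} {α β : M →ₗ[k] N}

theorem uePair (h : IsUEnv P E α β) : UEPair P E α β := h.1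

theorem existsUnique_lift (h : IsUEnv P E α β) {D : DGAOn k L} {f g : M →ₗ[k] L}
    (hfg : UEPair P D f g) :
    ∃! φ : N →ₗ[k] L, IsDGAHom E D φ ∧ (∀ a, φ (α a) = f a) ∧ ∀ a, φ (β a) = g a :=
  h.2 L D f g hfg

theorem op (h : IsUEnv P E α β) {P' : DGPAOn k M} {E' : DGAOn k N} (hP : IsOpDGPA P P')
    (hE : IsOpDGA E E') : IsUEnv P' E' α β := by
  refine ⟨h.uePair.op hP hE, fun D' _ _ D f g hfg => ?_⟩
  obtain ⟨φ, ⟨hφ, hα, hβ⟩, hunique⟩ := h.existsUnique_lift (hfg.op hP.symm D.isOpDGA_op)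
  exact ⟨φ, ⟨hφ.op hE D.isOpDGA_op.symm, hα, hβ⟩,
    fun ψ hψ => hunique ψ ⟨hψ.1.op hE.symm D.isOpDGA_op, hψ.2⟩⟩

theorem exists_bijective (h : IsUEnv P E α β) {F : DGAOn k L} {α' β' : M →ₗ[k] L}
    (h' : IsUEnv P F α' β') : ∃ φ : N →ₗ[k] L, IsDGAHom E F φ ∧ Function.Bijective φ := by
  obtain ⟨φ, ⟨hφ, hφα, hφβ⟩, -⟩ := h.existsUnique_lift h'.uePair
  obtain ⟨ψ, ⟨hψ, hψα, hψβ⟩, -⟩ := h'.existsUnique_lift h.uePair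
  have hψφ : ψ ∘ₗ φ = LinearMap.id := (h.existsUnique_lift h.uePair).unique
    ⟨hψ.comp hφ, by simp [hφα, hψα], by simp [hφβ, hψβ]⟩ ⟨.id E, by simp, by simp⟩
  have hφψ : φ ∘ₗ ψ = LinearMap.id := (h'.existsUnique_lift h'.uePair).unique
    ⟨hφ.comp hψ, by simp [hφα, hψα], by simp [hφβ, hψβ]⟩ ⟨.id F, by simp, by simp⟩
  exact ⟨φ, hφ, Function.bijective_iff_has_inverse.2
    ⟨ψ, fun x => congr($hψφ x), fun x => congr($hφψ x)⟩⟩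

end IsUEnv

/-- `E` is generated by `α` and `β`, as a graded algebra: a family of subspaces `ℋ n` which
contains the unit, `α a` and `β a` in their degrees and is closed under products of homogeneous
elements contains all of `E`. Stated as an induction principle over homogeneous elements. -/
def IsGeneratedBy (P : DGPAOn k M) (E : DGAOn k N) (α β : M →ₗ[k] N) : Prop :=
  ∀ ℋ : ℤ → Submodule k N, E.one ∈ ℋ 0 →
    (∀ {i j : ℤ} {x y : N}, x ∈ E.gr i → y ∈ E.gr j → x ∈ ℋ i → y ∈ ℋ j →
      E.mul x y ∈ ℋ (i + j)) →
    (∀ {i : ℤ} {a : M}, a ∈ P.gr i → α a ∈ ℋ i) →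
    (∀ {i : ℤ} {a : M}, a ∈ P.gr i → β a ∈ ℋ i) →
    ∀ n, E.gr n ≤ ℋ n

namespace IsGeneratedBy

variable {P : DGPAOn k M} {E : DGAOn k N} {α β : M →ₗ[k] N} {D : DGAOn k L} {φ ψ : N →ₗ[k] L}

theorem op (h : IsGeneratedBy P E α β) {P' : DGPAOn k M} {E' : DGAOn k N} (hP : IsOpDGPA P P')
    (hE : IsOpDGA E E') : IsGeneratedBy P' E' α β := by
  intro ℋ one_mem mul_mem hα hβ
  rw [hE.gr_eq] at mul_mem ⊢
  rw [hP.gr_eq] at hα hβ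
  refine h ℋ (hE.one_eq ▸ one_mem) (fun {i j x y} hx hy hx' hy' => ?_) hα hβ
  rw [hE.symm.mul_eq (hE.gr_eq ▸ hx) (hE.gr_eq ▸ hy), add_comm]
  exact Submodule.smul_mem _ _ (mul_mem hy hx hy' hx')

theorem hom_ext (h : IsGeneratedBy P E α β) (hφ : IsDGAHom E D φ) (hψ : IsDGAHom E D ψ)
    (hα : ∀ a, φ (α a) = ψ (α a)) (hβ : ∀ a, φ (β a) = ψ (β a)) : φ = ψ := by
  refine linearMap_ext_of_homogeneous E.gr
    (h (fun _ => LinearMap.eqLocus φ ψ) ?_ ?_ (fun _ => hα _) (fun _ => hβ _))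
  · exact hφ.map_one.trans hψ.map_one.symm
  · intro i j x y _ _ hx hy
    rw [LinearMap.mem_eqLocus] at hx hy ⊢
    rw [hφ.map_mul, hψ.map_mul, hx, hy]

theorem isDGAHom (h : IsGeneratedBy P E α β) {f g : M →ₗ[k] L} (hαβ : UEPair P E α β)
    (hfg : UEPair P D f g) (map_mul : ∀ x y, φ (E.mul x y) = D.mul (φ x) (φ y))
    (map_one : φ E.one = D.one) (hα : ∀ a, φ (α a) = f a) (hβ : ∀ a, φ (β a) = g a) :
    IsDGAHom E D φ := by
  have map_mem_and_d : ∀ n, E.gr n ≤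
      (D.gr n).comap φ ⊓ LinearMap.eqLocus (φ ∘ₗ E.d) (D.d ∘ₗ φ) := by
    refine h _ ?_ ?_ (fun ha => ?_) (fun ha => ?_)
    · exact ⟨by simp [map_one, D.one_mem], by simp [map_one, E.d_one, D.d_one]⟩
    · rintro i j x y hx hy ⟨hφx, hdx⟩ ⟨hφy, hdy⟩
      simp only [SetLike.mem_coe, Submodule.mem_comap, LinearMap.mem_eqLocus, LinearMap.comp_apply]
        at hφx hdx hφy hdy
      refine ⟨?_, ?_⟩
      · simpa [map_mul] using D.mul_mem hφx hφy
      · simp [E.d_mul hx hy, D.d_mul hφx hφy, map_mul, hdx, hdy]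
    · exact ⟨by simpa [hα] using hfg.fst_mem ha, by simp [hα, ← hαβ.fst_d, hfg.fst_d]⟩
    · exact ⟨by simpa [hβ] using hfg.snd_mem ha, by simp [hβ, ← hαβ.snd_d, hfg.snd_d]⟩
  have map_d : φ ∘ₗ E.d = D.d ∘ₗ φ :=
    linearMap_ext_of_homogeneous E.gr fun n x hx => (map_mem_and_d n hx).2
  exact ⟨fun hx => (map_mem_and_d _ hx).1, map_mul, map_one, fun x => congr($map_d x)⟩

theorem gradedComm_eq_zero (h : IsGeneratedBy P E α β) (hφ : IsDGAHom E D φ) {j : ℤ} {v : L}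
    (hα : ∀ {i : ℤ} {a : M}, a ∈ P.gr i → D.gradedComm i j (φ (α a)) v = 0)
    (hβ : ∀ {i : ℤ} {a : M}, a ∈ P.gr i → D.gradedComm i j (φ (β a)) v = 0)
    {i : ℤ} {x : N} (hx : x ∈ E.gr i) : D.gradedComm i j (φ x) v = 0 := by
  refine h (fun i => LinearMap.ker ((D.gradedComm i j).flip v ∘ₗ φ)) ?_ ?_ hα hβ i hx
  · simp [hφ.map_one, D.gradedComm_one_left]
  · intro i i' x x' _ _ hx hx'
    simp only [LinearMap.mem_ker, LinearMap.comp_apply, LinearMap.flip_apply] at hx hx' ⊢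
    simp [hφ.map_mul, D.gradedComm_mul_left, hx, hx']

theorem gradedComm_eq_zero₂ {M' N' : Type u} [AddCommGroup M'] [Module k M'] [AddCommGroup N']
    [Module k N'] {Q : DGPAOn k M'} {F : DGAOn k N'} {α' β' : M' →ₗ[k] N'} {ψ : N' →ₗ[k] L}
    (hE : IsGeneratedBy P E α β) (hF : IsGeneratedBy Q F α' β') (hφ : IsDGAHom E D φ)
    (hψ : IsDGAHom F D ψ)
    (hαα : ∀ {i j a b}, a ∈ P.gr i → b ∈ Q.gr j → D.gradedComm i j (φ (α a)) (ψ (α' b)) = 0)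
    (hαβ : ∀ {i j a b}, a ∈ P.gr i → b ∈ Q.gr j → D.gradedComm i j (φ (α a)) (ψ (β' b)) = 0)
    (hβα : ∀ {i j a b}, a ∈ P.gr i → b ∈ Q.gr j → D.gradedComm i j (φ (β a)) (ψ (α' b)) = 0)
    (hββ : ∀ {i j a b}, a ∈ P.gr i → b ∈ Q.gr j → D.gradedComm i j (φ (β a)) (ψ (β' b)) = 0)
    {i j : ℤ} {x : N} {y : N'} (hx : x ∈ E.gr i) (hy : y ∈ F.gr j) :
    D.gradedComm i j (φ x) (ψ y) = 0 := by
  have swap_eq_zero {i j : ℤ} {u v : L} (h : D.gradedComm i j u v = 0) :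
      D.gradedComm j i v u = 0 := by
    rw [D.gradedComm_swap, h, smul_zero, neg_zero]
  exact hE.gradedComm_eq_zero hφ
    (fun ha => swap_eq_zero (hF.gradedComm_eq_zero hψ (fun hb => swap_eq_zero (hαα ha hb))
      (fun hb => swap_eq_zero (hαβ ha hb)) hy))
    (fun ha => swap_eq_zero (hF.gradedComm_eq_zero hψ (fun hb => swap_eq_zero (hβα ha hb))
      (fun hb => swap_eq_zero (hββ ha hb)) hy)) hx

end IsGeneratedBy

end Poisson

section Envelope

variable {M N : Type u} [AddCommGroup M] [Module k M] [AddCommGroup N] [Module k N]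

/-- The ring underlying a differential graded algebra, which lets the universal properties of
`TensorAlgebra` and `RingQuot` map into it. -/
abbrev DGAOn.toRing (D : DGAOn k N) : Ring N :=
  { (inferInstance : AddCommGroup N) with
    mul := fun x y => D.mul x y
    one := D.one
    mul_assoc := D.mul_assoc
    one_mul := D.one_mul
    mul_one := D.mul_one
    left_distrib := fun x y z => map_add (D.mul x) y z
    right_distrib := fun x y z => LinearMap.map_add₂ D.mul x y z
    zero_mul := fun x => LinearMap.map_zero₂ D.mul x
    mul_zero := fun x => map_zero (D.mul x) }

/-- The `k`-algebra underlying a differential graded algebra. -/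
abbrev DGAOn.toAlgebra (D : DGAOn k N) : letI := D.toRing; Algebra k N :=
  letI := D.toRing
  Algebra.ofModule (fun r x y => LinearMap.map_smul₂ D.mul r x y)
    (fun r x y => map_smul (D.mul x) r y)

theorem UEPair.exists_env_lift {P : DGPAOn k M} {D : DGAOn k N} {f g : M →ₗ[k] N}
    (h : UEPair P D f g) :
    ∃ φ : Env P →ₗ[k] N, (∀ x y, φ (x * y) = D.mul (φ x) (φ y)) ∧ φ 1 = D.one ∧
      (∀ a, φ (mgen P a) = f a) ∧ ∀ a, φ (hgen P a) = g a := by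
  let := D.toRing
  let := D.toAlgebra
  have mul_eq (x y : N) : x * y = D.mul x y := rfl
  have one_eq : (1 : N) = D.one := rfl
  let lift : TensorAlgebra k (M × M) →ₐ[k] N := TensorAlgebra.lift k (f.coprod g)
  have lift_rel : ∀ ⦃x y⦄, EnvRel P x y → lift x = lift y := by
    intro x y hxy
    induction hxy with
    | relone => simp [lift, one_eq, h.fst_one]
    | relmul a b => simp [lift, mul_eq, h.fst_mul]
    | relhmul ha hb => simp [lift, mul_eq, h.snd_mul ha hb]
    | relmbr ha hb => simp [lift, mul_eq, ← h.gradedComm_snd_fst ha hb, D.gradedComm_apply]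
    | relhbr ha hb => simp [lift, mul_eq, ← h.gradedComm_snd_snd ha hb, D.gradedComm_apply]
  let Φ : Env P →ₐ[k] N := RingQuot.liftAlgHom k ⟨lift, lift_rel⟩
  exact ⟨Φ.toLinearMap, map_mul Φ, map_one Φ, fun a => by simp [Φ, mgen, lift],
    fun a => by simp [Φ, hgen, lift]⟩

theorem env_subalgebra_eq_top {P : DGPAOn k M} {S : Subalgebra k (Env P)}
    (hm : ∀ a, mgen P a ∈ S) (hh : ∀ a, hgen P a ∈ S) : S = ⊤ := by
  refine Algebra.eq_top_iff.2 fun x => ?_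
  obtain ⟨t, rfl⟩ := RingQuot.mkAlgHom_surjective k (EnvRel P) x
  induction t using TensorAlgebra.induction with
  | algebraMap r => exact AlgHom.commutes (RingQuot.mkAlgHom k (EnvRel P)) r ▸ S.algebraMap_mem r
  | ι v =>
    have hv : v = (v.1, 0) + (0, v.2) := by simp
    rw [hv, map_add, map_add]
    exact add_mem (hm v.1) (hh v.2)
  | mul a b ha hb => exact map_mul (RingQuot.mkAlgHom k (EnvRel P)) a b ▸ mul_mem ha hb
  | add a b ha hb => exact map_add (RingQuot.mkAlgHom k (EnvRel P)) a b ▸ add_mem ha hb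

namespace IsEnvDGA

variable {P : DGPAOn k M} {E : DGAOn k (Env P)}

theorem mul_eq (h : IsEnvDGA P E) (x y : Env P) : E.mul x y = x * y := h.1 x y

theorem one_eq (h : IsEnvDGA P E) : E.one = 1 := h.2.1

theorem mgen_mem (h : IsEnvDGA P E) {i : ℤ} {a : M} (ha : a ∈ P.gr i) : mgen P a ∈ E.gr i :=
  h.2.2.1 ha

theorem hgen_mem (h : IsEnvDGA P E) {i : ℤ} {a : M} (ha : a ∈ P.gr i) : hgen P a ∈ E.gr i :=
  h.2.2.2.1 ha

theorem uePair (h : IsEnvDGA P E) : UEPair P E (mgen P) (hgen P) := by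
  refine ⟨h.mgen_mem, h.hgen_mem, fun a b => ?_, ?_, fun a => (h.2.2.2.2.1 a).symm,
    fun a => (h.2.2.2.2.2 a).symm, fun ha hb => ?_, fun ha hb => ?_, fun ha hb => ?_⟩ <;>
    simp only [h.mul_eq, h.one_eq]
  · simpa [mgen] using RingQuot.mkAlgHom_rel k (EnvRel.relmul (P := P) a b)
  · simpa [mgen] using RingQuot.mkAlgHom_rel k (EnvRel.relone (P := P))
  · simpa [hgen] using RingQuot.mkAlgHom_rel k (EnvRel.relhbr ha hb)
  · simpa [mgen, hgen] using RingQuot.mkAlgHom_rel k (EnvRel.relmbr ha hb)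
  · simpa [mgen, hgen] using RingQuot.mkAlgHom_rel k (EnvRel.relhmul ha hb)

theorem isGeneratedBy (h : IsEnvDGA P E) : IsGeneratedBy P E (mgen P) (hgen P) := by
  intro ℋ one_mem mul_mem hm hh
  let 𝒦 : ℤ → Submodule k (Env P) := fun n => E.gr n ⊓ ℋ n
  have mul_le : Submodule.map₂ E.mul (⨆ n, 𝒦 n) (⨆ n, 𝒦 n) ≤ ⨆ n, 𝒦 n := by
    simp only [Submodule.map₂_iSup_left, Submodule.map₂_iSup_right, iSup_le_iff,
      Submodule.map₂_le]
    exact fun j i x hx y hy => Submodule.mem_iSup_of_mem (i + j)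
      ⟨E.mul_mem hx.1 hy.1, mul_mem hx.1 hy.1 hx.2 hy.2⟩
  let S : Subalgebra k (Env P) := (⨆ n, 𝒦 n).toSubalgebra
    (Submodule.mem_iSup_of_mem 0 (h.one_eq ▸ ⟨E.one_mem, one_mem⟩))
    (fun x y hx hy => h.mul_eq x y ▸ mul_le (Submodule.apply_mem_map₂ E.mul hx hy))
  have hS : S = ⊤ := env_subalgebra_eq_top
    (map_mem_iSup_of_homogeneous P.gr fun i a ha => ⟨h.mgen_mem ha, hm ha⟩)
    (map_mem_iSup_of_homogeneous P.gr fun i a ha => ⟨h.hgen_mem ha, hh ha⟩)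
  have iSup_eq_top : ⨆ n, 𝒦 n = ⊤ := congr(Subalgebra.toSubmodule $hS)
  have gr_eq : 𝒦 = E.gr :=
    ((DirectSum.Decomposition.isInternal E.gr).submodule_iSupIndep.le_iff_eq_of_iSup_eq_top
      iSup_eq_top).1 fun n => inf_le_left
  exact fun n => inf_eq_left.1 congr($gr_eq n)

theorem isUEnv (h : IsEnvDGA P E) : IsUEnv P E (mgen P) (hgen P) := by
  refine ⟨h.uePair, fun D' _ _ D f g hfg => ?_⟩
  obtain ⟨φ, map_mul, map_one, hm, hh⟩ := hfg.exists_env_lift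
  have hφ : IsDGAHom E D φ := h.isGeneratedBy.isDGAHom h.uePair hfg
    (fun x y => by rw [h.mul_eq, map_mul]) (by rw [h.one_eq, map_one]) hm hh
  exact ⟨φ, ⟨hφ, hm, hh⟩, fun ψ ⟨hψ, hψm, hψh⟩ =>
    h.isGeneratedBy.hom_ext hψ hφ (fun a => by rw [hψm, hm]) (fun a => by rw [hψh, hh])⟩

end IsEnvDGA

end Envelope

section TensorProduct

variable {A B X Y L : Type u} [AddCommGroup A] [Module k A] [AddCommGroup B] [Module k B]
  [AddCommGroup X] [Module k X] [AddCommGroup Y] [Module k Y] [AddCommGroup L] [Module k L]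

namespace IsTensorDGA

variable {E : DGAOn k X} {F : DGAOn k Y} {G : DGAOn k (X ⊗[k] Y)}

theorem gr_eq (h : IsTensorDGA E F G) (n : ℤ) : G.gr n = tensorGrading E.gr F.gr n := h.1 n

theorem one_eq (h : IsTensorDGA E F G) : G.one = E.one ⊗ₜ F.one := h.2.1

theorem tmul_mem (h : IsTensorDGA E F G) {i j : ℤ} {x : X} {y : Y} (hx : x ∈ E.gr i)
    (hy : y ∈ F.gr j) : x ⊗ₜ y ∈ G.gr (i + j) :=
  h.gr_eq (i + j) ▸ tmul_mem_tensorGrading hx hy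

theorem mul_tmul (h : IsTensorDGA E F G) {i j i' j' : ℤ} {x x' : X} {y y' : Y}
    (hx : x ∈ E.gr i) (hy : y ∈ F.gr j) (hx' : x' ∈ E.gr i') (hy' : y' ∈ F.gr j') :
    G.mul (x ⊗ₜ y) (x' ⊗ₜ y') = (-1 : k) ^ (i' * j) • (E.mul x x' ⊗ₜ F.mul y y') :=
  h.2.2.1 hx hy hx' hy'

theorem d_tmul (h : IsTensorDGA E F G) {i j : ℤ} {x : X} {y : Y} (hx : x ∈ E.gr i)
    (hy : y ∈ F.gr j) : G.d (x ⊗ₜ y) = E.d x ⊗ₜ y + (-1 : k) ^ i • (x ⊗ₜ F.d y) :=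
  h.2.2.2 hx hy

theorem gradedComm_tmul (h : IsTensorDGA E F G) {i j i' j' : ℤ} {x x' : X} {y y' : Y}
    (hx : x ∈ E.gr i) (hy : y ∈ F.gr j) (hx' : x' ∈ E.gr i') (hy' : y' ∈ F.gr j') :
    G.gradedComm (i + j) (i' + j') (x ⊗ₜ y) (x' ⊗ₜ y') =
      (-1 : k) ^ (i' * j) •
        (E.gradedComm i i' x x' ⊗ₜ F.mul y y' + E.mul x x' ⊗ₜ F.gradedComm j j' y y' -
          E.gradedComm i i' x x' ⊗ₜ F.gradedComm j j' y y') := by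
  have swapped_mul : (-1 : k) ^ ((i + j) * (i' + j')) • G.mul (x' ⊗ₜ y') (x ⊗ₜ y) =
      (-1 : k) ^ (i' * j) •
        (((-1 : k) ^ (i * i') • E.mul x' x) ⊗ₜ[k] ((-1 : k) ^ (j * j') • F.mul y' y)) := by
    rw [h.mul_tmul hx' hy' hx hy, TensorProduct.smul_tmul_smul,
      show (i + j) * (i' + j') = i * i' + j * j' + i' * j + i * j' by ring,
      zpow_add₀ (by simp), zpow_add₀ (by simp), zpow_add₀ (by simp)]
    simp only [mul_smul, neg_one_zpow_smul_smul]
    module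
  rw [G.gradedComm_apply, swapped_mul, h.mul_tmul hx hy hx' hy', ← smul_sub,
    E.neg_one_zpow_smul_mul, F.neg_one_zpow_smul_mul]
  simp only [TensorProduct.sub_tmul, TensorProduct.tmul_sub]
  module

theorem inl (h : IsTensorDGA E F G) :
    IsDGAHom E G ((TensorProduct.mk k X Y).flip F.one) := by
  refine ⟨fun {n x} hx => add_zero n ▸ h.tmul_mem hx F.one_mem, fun x x' => ?_, h.one_eq.symm,
    fun x => ?_⟩
  · suffices e : E.mul.compr₂ ((TensorProduct.mk k X Y).flip F.one) =
        G.mul.compl₁₂ ((TensorProduct.mk k X Y).flip F.one)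
          ((TensorProduct.mk k X Y).flip F.one) from congr($e x x')
    refine bilinMap_ext_of_homogeneous E.gr E.gr fun i i' x hx x' hx' => ?_
    simp [h.mul_tmul hx F.one_mem hx' F.one_mem, F.one_mul]
  · suffices e : (TensorProduct.mk k X Y).flip F.one ∘ₗ E.d =
        G.d ∘ₗ (TensorProduct.mk k X Y).flip F.one from congr($e x)
    refine linearMap_ext_of_homogeneous E.gr fun i x hx => ?_
    simp [h.d_tmul hx F.one_mem, F.d_one]

theorem inr (h : IsTensorDGA E F G) : IsDGAHom F G (TensorProduct.mk k X Y E.one) := by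
  refine ⟨fun {n y} hy => zero_add n ▸ h.tmul_mem E.one_mem hy, fun y y' => ?_, h.one_eq.symm,
    fun y => ?_⟩
  · suffices e : F.mul.compr₂ (TensorProduct.mk k X Y E.one) =
        G.mul.compl₁₂ (TensorProduct.mk k X Y E.one) (TensorProduct.mk k X Y E.one) from
      congr($e y y')
    refine bilinMap_ext_of_homogeneous F.gr F.gr fun j j' y hy y' hy' => ?_
    simp [h.mul_tmul E.one_mem hy E.one_mem hy', E.one_mul]
  · suffices e : TensorProduct.mk k X Y E.one ∘ₗ F.d =
        G.d ∘ₗ TensorProduct.mk k X Y E.one from congr($e y)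
    refine linearMap_ext_of_homogeneous F.gr fun j y hy => ?_
    simp [h.d_tmul E.one_mem hy, E.d_one]

theorem mul_tmul_one_one_tmul (h : IsTensorDGA E F G) (x : X) (y : Y) :
    G.mul (x ⊗ₜ F.one) (E.one ⊗ₜ y) = x ⊗ₜ y := by
  suffices e : G.mul.compl₁₂ ((TensorProduct.mk k X Y).flip F.one)
      (TensorProduct.mk k X Y E.one) = TensorProduct.mk k X Y from congr($e x y)
  refine bilinMap_ext_of_homogeneous E.gr F.gr fun i j x hx y hy => ?_
  simp [h.mul_tmul hx F.one_mem E.one_mem hy, E.mul_one, F.one_mul]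

theorem hom_ext (h : IsTensorDGA E F G) {D : DGAOn k L} {χ χ' : X ⊗[k] Y →ₗ[k] L}
    (hχ : IsDGAHom G D χ) (hχ' : IsDGAHom G D χ')
    (hl : χ ∘ₗ (TensorProduct.mk k X Y).flip F.one = χ' ∘ₗ (TensorProduct.mk k X Y).flip F.one)
    (hr : χ ∘ₗ TensorProduct.mk k X Y E.one = χ' ∘ₗ TensorProduct.mk k X Y E.one) : χ = χ' := by
  refine TensorProduct.ext' fun x y => ?_
  have hl' : χ (x ⊗ₜ F.one) = χ' (x ⊗ₜ F.one) := congr($hl x)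
  have hr' : χ (E.one ⊗ₜ y) = χ' (E.one ⊗ₜ y) := congr($hr y)
  rw [← h.mul_tmul_one_one_tmul, hχ.map_mul, hχ'.map_mul, hl', hr']

end IsTensorDGA

/-- The map `x ⊗ y ↦ φ(x) ψ(y)` on a tensor product, into the differential graded algebra `D`. -/
def tensorLift (D : DGAOn k L) (φ : X →ₗ[k] L) (ψ : Y →ₗ[k] L) : X ⊗[k] Y →ₗ[k] L :=
  TensorProduct.lift (D.mul.compl₁₂ φ ψ)

theorem tensorLift_tmul (D : DGAOn k L) (φ : X →ₗ[k] L) (ψ : Y →ₗ[k] L) (x : X) (y : Y) :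
    tensorLift D φ ψ (x ⊗ₜ y) = D.mul (φ x) (ψ y) := rfl

theorem isDGAHom_tensorLift {E : DGAOn k X} {F : DGAOn k Y} {G : DGAOn k (X ⊗[k] Y)}
    {D : DGAOn k L} {φ : X →ₗ[k] L} {ψ : Y →ₗ[k] L} (hφ : IsDGAHom E D φ) (hψ : IsDGAHom F D ψ)
    (hG : IsTensorDGA E F G)
    (hcomm : ∀ {i j x y}, x ∈ E.gr i → y ∈ F.gr j → D.gradedComm i j (φ x) (ψ y) = 0) :
    IsDGAHom G D (tensorLift D φ ψ) := by
  refine ⟨fun {n z} hz => ?_, fun z z' => ?_, ?_, fun z => ?_⟩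
  · refine tensorGrading_le (S := (D.gr n).comap (tensorLift D φ ψ)) ?_ (hG.gr_eq n ▸ hz)
    rintro i j x y rfl hx hy
    exact D.mul_mem (hφ.map_mem hx) (hψ.map_mem hy)
  · suffices e : G.mul.compr₂ (tensorLift D φ ψ) =
        D.mul.compl₁₂ (tensorLift D φ ψ) (tensorLift D φ ψ) from congr($e z z')
    refine tensorBilinMap_ext_of_homogeneous E.gr F.gr fun i j x hx y hy i' j' x' hx' y' hy' => ?_
    have hswap : (-1 : k) ^ (i' * j) • D.mul (φ x') (ψ y) = D.mul (ψ y) (φ x') := by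
      rw [sub_eq_zero.1 ((D.gradedComm_apply ..).symm.trans (hcomm hx' hy)),
        neg_one_zpow_smul_smul]
    simp only [LinearMap.compr₂_apply, LinearMap.compl₁₂_apply, tensorLift_tmul,
      hG.mul_tmul hx hy hx' hy', map_smul, hφ.map_mul, hψ.map_mul]
    calc (-1 : k) ^ (i' * j) • D.mul (D.mul (φ x) (φ x')) (D.mul (ψ y) (ψ y'))
      _ = D.mul (φ x) (D.mul ((-1 : k) ^ (i' * j) • D.mul (φ x') (ψ y)) (ψ y')) := by
        simp only [map_smul, LinearMap.smul_apply, D.mul_assoc]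
      _ = D.mul (D.mul (φ x) (ψ y)) (D.mul (φ x') (ψ y')) := by
        rw [hswap]
        simp only [D.mul_assoc]
  · rw [hG.one_eq, tensorLift_tmul, hφ.map_one, hψ.map_one, D.one_mul]
  · suffices e : tensorLift D φ ψ ∘ₗ G.d = D.d ∘ₗ tensorLift D φ ψ from congr($e z)
    refine tensorMap_ext_of_homogeneous E.gr F.gr fun i j x hx y hy => ?_
    simp [hG.d_tmul hx hy, tensorLift_tmul, D.d_mul (hφ.map_mem hx) (hψ.map_mem hy), hφ.map_d,
      hψ.map_d]

namespace IsTensorDGPA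

variable {P : DGPAOn k A} {Q : DGPAOn k B} {T : DGPAOn k (A ⊗[k] B)}

theorem toDGA (h : IsTensorDGPA P Q T) : IsTensorDGA P.toDGA Q.toDGA T.toDGA :=
  ⟨h.1, h.2.1, h.2.2.1, h.2.2.2.1⟩

theorem gr_eq (h : IsTensorDGPA P Q T) (n : ℤ) : T.gr n = tensorGrading P.gr Q.gr n := h.1 n

theorem one_eq (h : IsTensorDGPA P Q T) : T.one = P.one ⊗ₜ Q.one := h.2.1

theorem mul_tmul (h : IsTensorDGPA P Q T) {i j i' j' : ℤ} {a a' : A} {b b' : B}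
    (ha : a ∈ P.gr i) (hb : b ∈ Q.gr j) (ha' : a' ∈ P.gr i') (hb' : b' ∈ Q.gr j') :
    T.mul (a ⊗ₜ b) (a' ⊗ₜ b') = (-1 : k) ^ (i' * j) • (P.mul a a' ⊗ₜ Q.mul b b') :=
  h.2.2.1 ha hb ha' hb'

theorem d_tmul (h : IsTensorDGPA P Q T) {i j : ℤ} {a : A} {b : B} (ha : a ∈ P.gr i)
    (hb : b ∈ Q.gr j) : T.d (a ⊗ₜ b) = P.d a ⊗ₜ b + (-1 : k) ^ i • (a ⊗ₜ Q.d b) :=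
  h.2.2.2.1 ha hb

theorem br_tmul (h : IsTensorDGPA P Q T) {i j i' j' : ℤ} {a a' : A} {b b' : B}
    (ha : a ∈ P.gr i) (hb : b ∈ Q.gr j) (ha' : a' ∈ P.gr i') (hb' : b' ∈ Q.gr j') :
    T.br (a ⊗ₜ b) (a' ⊗ₜ b') =
      (-1 : k) ^ (i' * j) • (P.br a a' ⊗ₜ Q.mul b b' + P.mul a a' ⊗ₜ Q.br b b') :=
  h.2.2.2.2 ha hb ha' hb'

theorem inl (h : IsTensorDGPA P Q T) : IsDGPAHom P T ((TensorProduct.mk k A B).flip Q.one) := by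
  refine ⟨h.toDGA.inl.map_mem, h.toDGA.inl.map_mul, h.toDGA.inl.map_one, h.toDGA.inl.map_d,
    fun a a' => ?_⟩
  suffices e : P.br.compr₂ ((TensorProduct.mk k A B).flip Q.one) =
      T.br.compl₁₂ ((TensorProduct.mk k A B).flip Q.one)
        ((TensorProduct.mk k A B).flip Q.one) from congr($e a a')
  refine bilinMap_ext_of_homogeneous P.gr P.gr fun i i' a ha a' ha' => ?_
  simp [h.br_tmul ha Q.one_mem ha' Q.one_mem, Q.one_mul, Q.one_br]

theorem inr (h : IsTensorDGPA P Q T) : IsDGPAHom Q T (TensorProduct.mk k A B P.one) := by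
  refine ⟨h.toDGA.inr.map_mem, h.toDGA.inr.map_mul, h.toDGA.inr.map_one, h.toDGA.inr.map_d,
    fun b b' => ?_⟩
  suffices e : Q.br.compr₂ (TensorProduct.mk k A B P.one) =
      T.br.compl₁₂ (TensorProduct.mk k A B P.one) (TensorProduct.mk k A B P.one) from
    congr($e b b')
  refine bilinMap_ext_of_homogeneous Q.gr Q.gr fun j j' b hb b' hb' => ?_
  simp [h.br_tmul P.one_mem hb P.one_mem hb', P.one_mul, P.one_br]

theorem tmul_one_mem (h : IsTensorDGPA P Q T) {i : ℤ} {a : A} (ha : a ∈ P.gr i) :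
    a ⊗ₜ Q.one ∈ T.gr i :=
  h.inl.1 ha

theorem one_tmul_mem (h : IsTensorDGPA P Q T) {j : ℤ} {b : B} (hb : b ∈ Q.gr j) :
    P.one ⊗ₜ b ∈ T.gr j :=
  h.inr.1 hb

theorem mul_tmul_one_one_tmul (h : IsTensorDGPA P Q T) (a : A) (b : B) :
    T.mul (a ⊗ₜ Q.one) (P.one ⊗ₜ b) = a ⊗ₜ b :=
  h.toDGA.mul_tmul_one_one_tmul a b

theorem br_tmul_one_one_tmul (h : IsTensorDGPA P Q T) {i j : ℤ} {a : A} {b : B}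
    (ha : a ∈ P.gr i) (hb : b ∈ Q.gr j) : T.br (a ⊗ₜ Q.one) (P.one ⊗ₜ b) = 0 := by
  simp [h.br_tmul ha Q.one_mem P.one_mem hb, P.br_one, Q.one_br]

theorem map_tensor_mem (h : IsTensorDGPA P Q T) {E : DGAOn k X} {F : DGAOn k Y}
    {G : DGAOn k (X ⊗[k] Y)} (hG : IsTensorDGA E F G) {u : A →ₗ[k] X} {v : B →ₗ[k] Y}
    (hu_mem : ∀ {n a}, a ∈ P.gr n → u a ∈ E.gr n) (hv_mem : ∀ {n b}, b ∈ Q.gr n → v b ∈ F.gr n)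
    {n : ℤ} {z : A ⊗[k] B} (hz : z ∈ T.gr n) : TensorProduct.map u v z ∈ G.gr n := by
  refine tensorGrading_le (S := (G.gr n).comap (TensorProduct.map u v)) ?_ (h.gr_eq n ▸ hz)
  rintro i j a b rfl ha hb
  exact hG.tmul_mem (hu_mem ha) (hv_mem hb)

theorem map_d_tensor (h : IsTensorDGPA P Q T) {E : DGAOn k X} {F : DGAOn k Y}
    {G : DGAOn k (X ⊗[k] Y)} (hG : IsTensorDGA E F G) {u : A →ₗ[k] X} {v : B →ₗ[k] Y}
    (hu_mem : ∀ {n a}, a ∈ P.gr n → u a ∈ E.gr n) (hv_mem : ∀ {n b}, b ∈ Q.gr n → v b ∈ F.gr n)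
    (hu : ∀ a, u (P.d a) = E.d (u a)) (hv : ∀ b, v (Q.d b) = F.d (v b)) (z : A ⊗[k] B) :
    TensorProduct.map u v (T.d z) = G.d (TensorProduct.map u v z) := by
  suffices e : TensorProduct.map u v ∘ₗ T.d = G.d ∘ₗ TensorProduct.map u v from congr($e z)
  refine tensorMap_ext_of_homogeneous P.gr Q.gr fun i j a ha b hb => ?_
  simp [h.d_tmul ha hb, hG.d_tmul (hu_mem ha) (hv_mem hb), hu, hv]

end IsTensorDGPA

namespace UEPair

section Tensor

variable {P : DGPAOn k A} {Q : DGPAOn k B} {T : DGPAOn k (A ⊗[k] B)} {E : DGAOn k X}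
  {F : DGAOn k Y} {G : DGAOn k (X ⊗[k] Y)} {f g : A →ₗ[k] X} {f' g' : B →ₗ[k] Y}

theorem gradedComm_snd_snd_tmul (h : UEPair P E f g) (h' : UEPair Q F f' g')
    (hT : IsTensorDGPA P Q T) (hG : IsTensorDGA E F G) {i j i' j' : ℤ} {a a' : A} {b b' : B}
    (ha : a ∈ P.gr i) (hb : b ∈ Q.gr j) (ha' : a' ∈ P.gr i') (hb' : b' ∈ Q.gr j') :
    G.gradedComm (i + j) (i' + j') (f a ⊗ₜ g' b + g a ⊗ₜ f' b) (f a' ⊗ₜ g' b' + g a' ⊗ₜ f' b') =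
      (TensorProduct.map f g' + TensorProduct.map g f') (T.br (a ⊗ₜ b) (a' ⊗ₜ b')) := by
  have hmixed := h.fst_mul_snd_add_snd_mul_fst ha ha'
  have hmixed' := h'.fst_mul_snd_add_snd_mul_fst hb hb'
  rw [hT.br_tmul ha hb ha' hb']
  simp only [map_add, LinearMap.add_apply,
    hG.gradedComm_tmul (h.fst_mem ha) (h'.snd_mem hb) (h.fst_mem ha') (h'.snd_mem hb'),
    hG.gradedComm_tmul (h.fst_mem ha) (h'.snd_mem hb) (h.snd_mem ha') (h'.fst_mem hb'),
    hG.gradedComm_tmul (h.snd_mem ha) (h'.fst_mem hb) (h.fst_mem ha') (h'.snd_mem hb'),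
    hG.gradedComm_tmul (h.snd_mem ha) (h'.fst_mem hb) (h.snd_mem ha') (h'.fst_mem hb'),
    h.gradedComm_fst_fst ha ha', h.gradedComm_fst_snd ha ha', h.gradedComm_snd_fst ha ha',
    h.gradedComm_snd_snd ha ha', h'.gradedComm_fst_fst hb hb', h'.gradedComm_fst_snd hb hb',
    h'.gradedComm_snd_fst hb hb', h'.gradedComm_snd_snd hb hb', map_smul, TensorProduct.map_tmul]
  rw [eq_sub_of_add_eq hmixed.symm, eq_sub_of_add_eq hmixed'.symm, h.fst_mul, h'.fst_mul]
  simp only [TensorProduct.zero_tmul, TensorProduct.tmul_zero, TensorProduct.add_tmul,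
    TensorProduct.tmul_add, TensorProduct.sub_tmul, TensorProduct.tmul_sub]
  module

theorem gradedComm_snd_fst_tmul (h : UEPair P E f g) (h' : UEPair Q F f' g')
    (hT : IsTensorDGPA P Q T) (hG : IsTensorDGA E F G) {i j i' j' : ℤ} {a a' : A} {b b' : B}
    (ha : a ∈ P.gr i) (hb : b ∈ Q.gr j) (ha' : a' ∈ P.gr i') (hb' : b' ∈ Q.gr j') :
    G.gradedComm (i + j) (i' + j') (f a ⊗ₜ g' b + g a ⊗ₜ f' b) (f a' ⊗ₜ f' b') =
      TensorProduct.map f f' (T.br (a ⊗ₜ b) (a' ⊗ₜ b')) := by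
  rw [hT.br_tmul ha hb ha' hb']
  simp only [map_add, LinearMap.add_apply,
    hG.gradedComm_tmul (h.fst_mem ha) (h'.snd_mem hb) (h.fst_mem ha') (h'.fst_mem hb'),
    hG.gradedComm_tmul (h.snd_mem ha) (h'.fst_mem hb) (h.fst_mem ha') (h'.fst_mem hb'),
    h.gradedComm_fst_fst ha ha', h.gradedComm_snd_fst ha ha', h'.gradedComm_fst_fst hb hb',
    h'.gradedComm_snd_fst hb hb', map_smul, TensorProduct.map_tmul, h.fst_mul, h'.fst_mul,
    TensorProduct.zero_tmul, TensorProduct.tmul_zero]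
  module

theorem fst_mul_snd_add_snd_mul_fst_tmul (h : UEPair P E f g) (h' : UEPair Q F f' g')
    (hT : IsTensorDGPA P Q T) (hG : IsTensorDGA E F G) {i j i' j' : ℤ} {a a' : A} {b b' : B}
    (ha : a ∈ P.gr i) (hb : b ∈ Q.gr j) (ha' : a' ∈ P.gr i') (hb' : b' ∈ Q.gr j') :
    G.mul (f a ⊗ₜ f' b) (f a' ⊗ₜ g' b' + g a' ⊗ₜ f' b') +
        G.mul (f a ⊗ₜ g' b + g a ⊗ₜ f' b) (f a' ⊗ₜ f' b') =
      (TensorProduct.map f g' + TensorProduct.map g f') (T.mul (a ⊗ₜ b) (a' ⊗ₜ b')) +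
        TensorProduct.map f f' (T.br (a ⊗ₜ b) (a' ⊗ₜ b')) := by
  have hmixed := h.fst_mul_snd_add_snd_mul_fst ha ha'
  have hmixed' := h'.fst_mul_snd_add_snd_mul_fst hb hb'
  rw [hT.mul_tmul ha hb ha' hb', hT.br_tmul ha hb ha' hb']
  simp only [map_add, LinearMap.add_apply, map_smul, TensorProduct.map_tmul,
    hG.mul_tmul (h.fst_mem ha) (h'.fst_mem hb) (h.fst_mem ha') (h'.snd_mem hb'),
    hG.mul_tmul (h.fst_mem ha) (h'.fst_mem hb) (h.snd_mem ha') (h'.fst_mem hb'),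
    hG.mul_tmul (h.fst_mem ha) (h'.snd_mem hb) (h.fst_mem ha') (h'.fst_mem hb'),
    hG.mul_tmul (h.snd_mem ha) (h'.fst_mem hb) (h.fst_mem ha') (h'.fst_mem hb')]
  rw [eq_sub_of_add_eq hmixed.symm, eq_sub_of_add_eq hmixed'.symm, h.fst_mul, h'.fst_mul]
  simp only [TensorProduct.add_tmul, TensorProduct.tmul_add, TensorProduct.sub_tmul,
    TensorProduct.tmul_sub]
  module

theorem fst_mul_tensor (h : UEPair P E f g) (h' : UEPair Q F f' g') (hT : IsTensorDGPA P Q T)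
    (hG : IsTensorDGA E F G) (z z' : A ⊗[k] B) :
    TensorProduct.map f f' (T.mul z z') =
      G.mul (TensorProduct.map f f' z) (TensorProduct.map f f' z') := by
  suffices e : T.mul.compr₂ (TensorProduct.map f f') =
      G.mul.compl₁₂ (TensorProduct.map f f') (TensorProduct.map f f') from congr($e z z')
  refine tensorBilinMap_ext_of_homogeneous P.gr Q.gr fun i j a ha b hb i' j' a' ha' b' hb' => ?_
  simp [hT.mul_tmul ha hb ha' hb', h.fst_mul, h'.fst_mul,
    hG.mul_tmul (h.fst_mem ha) (h'.fst_mem hb) (h.fst_mem ha') (h'.fst_mem hb')]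

theorem tensor (h : UEPair P E f g) (h' : UEPair Q F f' g') (hT : IsTensorDGPA P Q T)
    (hG : IsTensorDGA E F G) :
    UEPair T G (TensorProduct.map f f') (TensorProduct.map f g' + TensorProduct.map g f') := by
  set p := TensorProduct.map f f'
  set q := TensorProduct.map f g' + TensorProduct.map g f'
  apply of_gradedComm
  · exact fun hz => hT.map_tensor_mem hG h.fst_mem h'.fst_mem hz
  · exact fun hz => add_mem (hT.map_tensor_mem hG h.fst_mem h'.snd_mem hz)
      (hT.map_tensor_mem hG h.snd_mem h'.fst_mem hz)
  · exact h.fst_mul_tensor h' hT hG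
  · rw [hT.one_eq, TensorProduct.map_tmul, h.fst_one, h'.fst_one, hG.one_eq]
  · exact hT.map_d_tensor hG h.fst_mem h'.fst_mem h.fst_d h'.fst_d
  · intro z
    rw [LinearMap.add_apply, LinearMap.add_apply, map_add,
      hT.map_d_tensor hG h.fst_mem h'.snd_mem h.fst_d h'.snd_d,
      hT.map_d_tensor hG h.snd_mem h'.fst_mem h.snd_d h'.fst_d]
  · intro m n z z' hz hz'
    rw [hT.gr_eq] at hz hz'
    refine bilinMap_eq_on_tensorGrading (f := (G.gradedComm m n).compl₁₂ q q) (g := T.br.compr₂ q)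
      ?_ hz hz'
    rintro i j a b rfl ha hb i' j' a' b' rfl ha' hb'
    exact h.gradedComm_snd_snd_tmul h' hT hG ha hb ha' hb'
  · intro m n z z' hz hz'
    rw [hT.gr_eq] at hz hz'
    refine bilinMap_eq_on_tensorGrading (f := (G.gradedComm m n).compl₁₂ q p) (g := T.br.compr₂ p)
      ?_ hz hz'
    rintro i j a b rfl ha hb i' j' a' b' rfl ha' hb'
    exact h.gradedComm_snd_fst_tmul h' hT hG ha hb ha' hb'
  · intro m n z z' _ _
    suffices e : G.mul.compl₁₂ p q + G.mul.compl₁₂ q p = T.mul.compr₂ q + T.br.compr₂ p from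
      congr($e z z')
    exact tensorBilinMap_ext_of_homogeneous P.gr Q.gr fun i j a ha b hb i' j' a' ha' b' hb' =>
      h.fst_mul_snd_add_snd_mul_fst_tmul h' hT hG ha hb ha' hb'

theorem tensor_hom_ext (h : UEPair P E f g) (h' : UEPair Q F f' g') (hE : IsGeneratedBy P E f g)
    (hF : IsGeneratedBy Q F f' g') (hG : IsTensorDGA E F G) {D : DGAOn k L}
    {χ χ' : X ⊗[k] Y →ₗ[k] L} (hχ : IsDGAHom G D χ) (hχ' : IsDGAHom G D χ')
    (hfst : ∀ z, χ (TensorProduct.map f f' z) = χ' (TensorProduct.map f f' z))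
    (hsnd : ∀ z, χ ((TensorProduct.map f g' + TensorProduct.map g f') z) =
      χ' ((TensorProduct.map f g' + TensorProduct.map g f') z)) : χ = χ' := by
  refine hG.hom_ext hχ hχ' ?_ ?_
  · refine hE.hom_ext (hχ.comp hG.inl) (hχ'.comp hG.inl) (fun a => ?_) (fun a => ?_)
    · simpa [h'.fst_one] using hfst (a ⊗ₜ Q.one)
    · simpa [h'.fst_one, h'.snd_one] using hsnd (a ⊗ₜ Q.one)
  · refine hF.hom_ext (hχ.comp hG.inr) (hχ'.comp hG.inr) (fun b => ?_) (fun b => ?_)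
    · simpa [h.fst_one] using hfst (P.one ⊗ₜ b)
    · simpa [h.fst_one, h.snd_one] using hsnd (P.one ⊗ₜ b)

end Tensor

section Restriction

variable {P : DGPAOn k A} {Q : DGPAOn k B} {T : DGPAOn k (A ⊗[k] B)} {D : DGAOn k L}
  {p q : A ⊗[k] B →ₗ[k] L}

theorem fst_tmul (h : UEPair T D p q) (hT : IsTensorDGPA P Q T) (a : A) (b : B) :
    p (a ⊗ₜ b) = D.mul (p (a ⊗ₜ Q.one)) (p (P.one ⊗ₜ b)) := by
  rw [← h.fst_mul, hT.mul_tmul_one_one_tmul]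

theorem snd_tmul (h : UEPair T D p q) (hT : IsTensorDGPA P Q T) {i j : ℤ} {a : A} {b : B}
    (ha : a ∈ P.gr i) (hb : b ∈ Q.gr j) :
    q (a ⊗ₜ b) = D.mul (p (a ⊗ₜ Q.one)) (q (P.one ⊗ₜ b)) +
      D.mul (q (a ⊗ₜ Q.one)) (p (P.one ⊗ₜ b)) := by
  rw [h.fst_mul_snd_add_snd_mul_fst (hT.tmul_one_mem ha) (hT.one_tmul_mem hb),
    hT.mul_tmul_one_one_tmul, hT.br_tmul_one_one_tmul ha hb, map_zero, add_zero]

theorem gradedComm_lifts_eq_zero (h : UEPair T D p q) (hT : IsTensorDGPA P Q T) {E : DGAOn k X}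
    {F : DGAOn k Y} {α β : A →ₗ[k] X} {α' β' : B →ₗ[k] Y} {φ : X →ₗ[k] L} {ψ : Y →ₗ[k] L}
    (hE : IsGeneratedBy P E α β) (hF : IsGeneratedBy Q F α' β')
    (hφ : IsDGAHom E D φ) (hψ : IsDGAHom F D ψ)
    (hφα : ∀ a, φ (α a) = p (a ⊗ₜ Q.one)) (hφβ : ∀ a, φ (β a) = q (a ⊗ₜ Q.one))
    (hψα : ∀ b, ψ (α' b) = p (P.one ⊗ₜ b)) (hψβ : ∀ b, ψ (β' b) = q (P.one ⊗ₜ b))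
    {i j : ℤ} {x : X} {y : Y} (hx : x ∈ E.gr i) (hy : y ∈ F.gr j) :
    D.gradedComm i j (φ x) (ψ y) = 0 := by
  refine hE.gradedComm_eq_zero₂ hF hφ hψ ?_ ?_ ?_ ?_ hx hy <;> intro i j a b ha hb
  · rw [hφα, hψα, h.gradedComm_fst_fst (hT.tmul_one_mem ha) (hT.one_tmul_mem hb)]
  · rw [hφα, hψβ, h.gradedComm_fst_snd (hT.tmul_one_mem ha) (hT.one_tmul_mem hb),
      hT.br_tmul_one_one_tmul ha hb, map_zero]
  · rw [hφβ, hψα, h.gradedComm_snd_fst (hT.tmul_one_mem ha) (hT.one_tmul_mem hb),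
      hT.br_tmul_one_one_tmul ha hb, map_zero]
  · rw [hφβ, hψβ, h.gradedComm_snd_snd (hT.tmul_one_mem ha) (hT.one_tmul_mem hb),
      hT.br_tmul_one_one_tmul ha hb, map_zero]

end Restriction

end UEPair

namespace IsUEnv

variable {P : DGPAOn k A} {Q : DGPAOn k B} {T : DGPAOn k (A ⊗[k] B)} {E : DGAOn k X}
  {F : DGAOn k Y} {G : DGAOn k (X ⊗[k] Y)} {α β : A →ₗ[k] X} {α' β' : B →ₗ[k] Y}

theorem exists_tensor_lift (h : IsUEnv P E α β) (h' : IsUEnv Q F α' β')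
    (hE : IsGeneratedBy P E α β) (hF : IsGeneratedBy Q F α' β') (hT : IsTensorDGPA P Q T)
    (hG : IsTensorDGA E F G) {D : DGAOn k L} {p q : A ⊗[k] B →ₗ[k] L} (hpq : UEPair T D p q) :
    ∃ χ : X ⊗[k] Y →ₗ[k] L, IsDGAHom G D χ ∧ (∀ z, χ (TensorProduct.map α α' z) = p z) ∧
      ∀ z, χ ((TensorProduct.map α β' + TensorProduct.map β α') z) = q z := by
  obtain ⟨φ, ⟨hφ, hφα, hφβ⟩, -⟩ := h.existsUnique_lift (hpq.comp_dgpaHom hT.inl)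
  obtain ⟨ψ, ⟨hψ, hψα, hψβ⟩, -⟩ := h'.existsUnique_lift (hpq.comp_dgpaHom hT.inr)
  simp only [LinearMap.comp_apply, LinearMap.flip_apply, TensorProduct.mk_apply]
    at hφα hφβ hψα hψβ
  have hfst : tensorLift D φ ψ ∘ₗ TensorProduct.map α α' = p :=
    TensorProduct.ext' fun a b => by simp [tensorLift_tmul, hφα, hψα, hpq.fst_tmul hT a b]
  have hsnd : tensorLift D φ ψ ∘ₗ (TensorProduct.map α β' + TensorProduct.map β α') = q :=
    tensorMap_ext_of_homogeneous P.gr Q.gr fun i j a ha b hb => by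
      simp [tensorLift_tmul, hφα, hψα, hφβ, hψβ, hpq.snd_tmul hT ha hb]
  exact ⟨tensorLift D φ ψ,
    isDGAHom_tensorLift hφ hψ hG (hpq.gradedComm_lifts_eq_zero hT hE hF hφ hψ hφα hφβ hψα hψβ),
    fun z => congr($hfst z), fun z => congr($hsnd z)⟩

theorem tensor (h : IsUEnv P E α β) (h' : IsUEnv Q F α' β') (hE : IsGeneratedBy P E α β)
    (hF : IsGeneratedBy Q F α' β') (hT : IsTensorDGPA P Q T) (hG : IsTensorDGA E F G) :
    IsUEnv T G (TensorProduct.map α α') (TensorProduct.map α β' + TensorProduct.map β α') := by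
  refine ⟨h.uePair.tensor h'.uePair hT hG, fun D' _ _ D p q hpq => ?_⟩
  obtain ⟨χ, hχ, hfst, hsnd⟩ := h.exists_tensor_lift h' hE hF hT hG hpq
  refine ⟨χ, ⟨hχ, hfst, hsnd⟩, fun χ' ⟨hχ', hfst', hsnd'⟩ => ?_⟩
  refine h.uePair.tensor_hom_ext h'.uePair hE hF hG hχ' hχ (fun z => ?_) (fun z => ?_)
  · rw [hfst', hfst]
  · rw [hsnd', hsnd]

end IsUEnv

end TensorProduct

/-- for `A^𝓔 := A ⊗ A^{op}` (a differential graded Poisson algebra with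
the tensor product structure), `(A^𝓔)^e ≅ (A^e)^𝓔 = A^e ⊗ (A^e)^{op}` as differential
graded algebras. -/
theorem stmt_19 (k : Type u) [Field k] (M : Type u) [AddCommGroup M] [Module k M]
    (P Pop : DGPAOn k M) (hop : IsOpDGPA P Pop)
    (T : DGPAOn k (M ⊗[k] M)) (hT : IsTensorDGPA P Pop T)
    (ET : DGAOn k (Env T)) (hET : IsEnvDGA T ET)
    (E : DGAOn k (Env P)) (hE : IsEnvDGA P E)
    (Eop : DGAOn k (Env P)) (hEop : IsOpDGA E Eop)
    (G : DGAOn k (Env P ⊗[k] Env P)) (hG : IsTensorDGA E Eop G) :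
    ∃ φ : Env T →ₗ[k] Env P ⊗[k] Env P,
      IsDGAHom ET G φ ∧ Function.Bijective φ := by
  have henv : IsUEnv P E (mgen P) (hgen P) := hE.isUEnv
  have hgenerated : IsGeneratedBy P E (mgen P) (hgen P) := hE.isGeneratedBy
  have henv_op : IsUEnv Pop Eop (mgen P) (hgen P) := henv.op hop hEop
  exact hET.isUEnv.exists_bijective
    (henv.tensor henv_op hgenerated (hgenerated.op hop hEop) hT hG)

end DGPaper

end
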